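/- Let ϖ ⊂ Ω_{C°} be a nonempty compact set and let K_j ∈ K(C,ϖ) for j ∈ ℕ₀. If K_j → K₀ as j → ∞ (in the sense of convergence of C-pseudo-cones), then the Θ-weighted surface area measures converge weakly: S_{n−1}^Θ(K_j,·) → S_{n−1}^Θ(K₀,·). -/

import Mathlib

open MeasureTheory Set Filter
open scoped RealInnerProductSpace ENNReal Topology Pointwise NNReal

noncomputable section

abbrev En (n : ℕ) := EuclideanSpace ℝ (Fin n)

/-- `C` is a pointed closed convex cone with nonempty interior. -/
def IsGoodCone (n : ℕ) (C : Set (En n)) : Prop :=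
  IsClosed C ∧ Convex ℝ C ∧ (∀ x ∈ C, ∀ r : ℝ, 0 ≤ r → r • x ∈ C) ∧
    C ∩ (-C) = {0} ∧ (interior C).Nonempty

/-- The dual cone `C° = {x : ⟨x,y⟩ ≤ 0 ∀ y ∈ C}`. -/
def dualCone (n : ℕ) (C : Set (En n)) : Set (En n) := {x | ∀ y ∈ C, ⟪x, y⟫ ≤ 0}

/-- `Ω_C = S^{n-1} ∩ int C`. -/
def omegaC (n : ℕ) (C : Set (En n)) : Set (En n) := Metric.sphere 0 1 ∩ interior C

/-- `Ω_{C°} = S^{n-1} ∩ int C°`. -/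
def omegaDual (n : ℕ) (C : Set (En n)) : Set (En n) :=
  Metric.sphere 0 1 ∩ interior (dualCone n C)

/-- A pseudo-cone: nonempty closed convex set not containing `0` with `λK ⊆ K` for `λ ≥ 1`. -/
def IsPseudoCone (n : ℕ) (K : Set (En n)) : Prop :=
  K.Nonempty ∧ IsClosed K ∧ Convex ℝ K ∧ (0 : En n) ∉ K ∧ ∀ l : ℝ, 1 ≤ l → l • K ⊆ K

/-- The recession cone of `K`. -/
def recCone (n : ℕ) (K : Set (En n)) : Set (En n) :=
  {z | ∀ x ∈ K, ∀ t : ℝ, 0 ≤ t → x + t • z ∈ K}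

/-- A `C`-pseudo-cone: a pseudo-cone with recession cone `C`. -/
def IsCPseudoCone (n : ℕ) (C K : Set (En n)) : Prop := IsPseudoCone n K ∧ recCone n K = C

/-- The set of outer unit normal vectors of `K` at `x`. -/
def normalsAt (n : ℕ) (K : Set (En n)) (x : En n) : Set (En n) :=
  {u | ‖u‖ = 1 ∧ ∀ y ∈ K, ⟪y, u⟫ ≤ ⟪x, u⟫}

/-- `ν_K^{-1}(ω)`: the boundary points of `K` whose outer unit normal is unique and lies in `ω`. -/
def nuInv (n : ℕ) (K ω : Set (En n)) : Set (En n) :=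
  {x | x ∈ frontier K ∧ ∃ u ∈ ω, normalsAt n K x = {u}}

open Classical in
/-- The outer unit normal map `ν_K` (junk value `0` where the normal is not unique). -/
def nuMap (n : ℕ) (K : Set (En n)) (x : En n) : En n :=
  if h : ∃ u, normalsAt n K x = {u} then h.choose else 0

/-- `Δ(ω)`: the spherical (angular) distance of `ω` from the boundary of `Ω_{C°}`
(the relative boundary of `Ω_{C°}` in the unit sphere is `closure Ω_{C°} \ Ω_{C°}`,
since `Ω_{C°}` is relatively open in the sphere). -/
def sphereAngleDist (n : ℕ) (C ω : Set (En n)) : ℝ :=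
  sInf {d | ∃ u ∈ ω, ∃ v ∈ closure (omegaDual n C) \ omegaDual n C,
    d = InnerProductGeometry.angle u v}

/-- `b(K)`: the distance of `K` from the origin. -/
def distOrigin (n : ℕ) (K : Set (En n)) : ℝ := Metric.infDist 0 K

/-- `C^-(t) = C ∩ H^-(𝔳, t)`. -/
def Cminus (n : ℕ) (C : Set (En n)) (v : En n) (t : ℝ) : Set (En n) :=
  C ∩ {x | ⟪x, v⟫ ≤ t}

/-- The support function `h_K(u) = sup{⟨y,u⟩ : y ∈ K}`. -/
def suppFn (n : ℕ) (K : Set (En n)) (u : En n) : ℝ := sSup ((fun y => ⟪y, u⟫) '' K)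

/-- `Θ : C∖{0} → (0,∞)` continuous and homogeneous of degree `-q`. -/
def IsThetaWeight (n : ℕ) (C : Set (En n)) (q : ℝ) (Θ : En n → ℝ) : Prop :=
  ContinuousOn Θ (C \ {0}) ∧ (∀ y ∈ C \ {0}, 0 < Θ y) ∧
    ∀ y ∈ C \ {0}, ∀ r : ℝ, 0 < r → Θ (r • y) = r ^ (-q) * Θ y

/-- The `Θ`-weighted `n`-dimensional Hausdorff (Lebesgue) measure `H_Θ^n`. -/
def HTheta (n : ℕ) (Θ : En n → ℝ) : Measure (En n) :=
  volume.withDensity fun y => ENNReal.ofReal (Θ y)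

/-- The `Θ`-weighted cone-volume measure `V_K^Θ(ω) = H_Θ^n(⋃_{x ∈ ν_K^{-1}(ω)} [0,x])`. -/
def coneVol (n : ℕ) (Θ : En n → ℝ) (K ω : Set (En n)) : ℝ≥0∞ :=
  HTheta n Θ (⋃ x ∈ nuInv n K ω, segment ℝ (0 : En n) x)

/-- The (unweighted) cone-volume measure `V_K(ω) = H^n(⋃_{x ∈ ν_K^{-1}(ω)} [0,x])`. -/
def coneVolU (n : ℕ) (K ω : Set (En n)) : ℝ≥0∞ :=
  volume (⋃ x ∈ nuInv n K ω, segment ℝ (0 : En n) x)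

/-- The `Θ`-weighted surface area measure `S_{n-1}^Θ(K,ω) = ∫_{ν_K^{-1}(ω)} Θ dH^{n-1}`. -/
def surfTheta (n : ℕ) (Θ : En n → ℝ) (K ω : Set (En n)) : ℝ≥0∞ :=
  ∫⁻ x in nuInv n K ω, ENNReal.ofReal (Θ x) ∂(μH[(n : ℝ) - 1])

/-- `K ∈ K(C,ϖ)`: `K` is a `C`-pseudo-cone that is `C`-determined by `ϖ`. -/
def CDetermined (n : ℕ) (C ϖ K : Set (En n)) : Prop :=
  IsCPseudoCone n C K ∧ K = C ∩ ⋂ u ∈ ϖ, {x | ⟪x, u⟫ ≤ suppFn n K u}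

/-- The Wulff shape `[g] = C ∩ ⋂_{u ∈ ϖ} {y : ⟨y,u⟩ ≤ -g(u)}`. -/
def wulff (n : ℕ) (C ϖ : Set (En n)) (g : En n → ℝ) : Set (En n) :=
  C ∩ ⋂ u ∈ ϖ, {y | ⟪y, u⟫ ≤ -g u}

/-- The `Θ`-weighted covolume `V_Θ(K) = ∫_{C∖K} Θ dH^n`. -/
def covol (n : ℕ) (Θ : En n → ℝ) (C K : Set (En n)) : ℝ≥0∞ := HTheta n Θ (C \ K)

/-- The radial function `ρ_K(v) = min{λ : λv ∈ K}`. -/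
def rho (n : ℕ) (K : Set (En n)) (v : En n) : ℝ := sInf {t : ℝ | t • v ∈ K}

/-- The radial map `r_K(v) = ρ_K(v) v`. -/
def radMap (n : ℕ) (K : Set (En n)) (v : En n) : En n := rho n K v • v

/-- `α_K^{-1}(ω)`: directions `v ∈ Ω_C` with `r_K(v) ∈ ∂'K` (boundary point in `int C` with
unique outer normal) whose unique outer normal lies in `ω`. -/
def alphaInv (n : ℕ) (C K ω : Set (En n)) : Set (En n) :=
  {v ∈ omegaC n C | radMap n K v ∈ frontier K ∧ radMap n K v ∈ interior C ∧
    ∃ u ∈ ω, normalsAt n K (radMap n K v) = {u}}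

/-- `μ` is the Borel measure on `Ω_{C°}` representing the `Θ`-weighted cone-volume
measure of `K` (extended by `0` outside `Ω_{C°}`). -/
def RepsConeVol (n : ℕ) (C : Set (En n)) (Θ : En n → ℝ) (K : Set (En n))
    (μ : Measure (En n)) : Prop :=
  μ (omegaDual n C)ᶜ = 0 ∧
    ∀ ω, MeasurableSet ω → ω ⊆ omegaDual n C → μ ω = coneVol n Θ K ω

/-- `μ` is the Borel measure on `Ω_{C°}` representing the `Θ`-weighted surface area
measure of `K` (extended by `0` outside `Ω_{C°}`). -/
def RepsSurf (n : ℕ) (C : Set (En n)) (Θ : En n → ℝ) (K : Set (En n))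
    (μ : Measure (En n)) : Prop :=
  μ (omegaDual n C)ᶜ = 0 ∧
    ∀ ω, MeasurableSet ω → ω ⊆ omegaDual n C → μ ω = surfTheta n Θ K ω

/-!
Since `v` is interior to `C`, every `C`-pseudo-cone is the epigraph, in the direction `v`, of a
convex function on `vᗮ` whose Lipschitz constant depends only on `C`; convergence of pseudo-cones
becomes pointwise convergence `g i → g₀` of these functions. Convexity makes `g i - g₀` eventually
`ε`-Lipschitz near every differentiability point of `g₀`. So the gradients, hence the normal
vectors, converge almost everywhere, and so do the area densities of the graphs, because nearby
graphs are almost isometric at small scales.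

At a smooth boundary point of a set determined by `ϖ`, a normal vector in `Ω_{C°}` lies in `ϖ`. As
`ϖ` is closed, such normal vectors cannot converge to a vector outside `Ω_{C°}`; as `ϖ` is a compact
subset of `Ω_{C°}`, the boundary points with such normal vectors stay in a bounded region. They also
stay away from the origin, so `Θ` is bounded there and dominated convergence applies.
-/

/-! ### Limits of convex functions -/

lemma tendstoUniformlyOn_of_equicontinuousOn {X α ι : Type*} [TopologicalSpace X] [UniformSpace α]
    {F : ι → X → α} {f : X → α} {l : Filter ι} {s : Set X} (hs : IsCompact s)
    (hF : EquicontinuousOn F s) (hlim : ∀ x ∈ s, Tendsto (fun i => F i x) l (𝓝 (f x))) :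
    TendstoUniformlyOn F f l s := by
  have hiff := EquicontinuousOn.tendsto_uniformOnFun_iff_pi' (𝔖 := {s}) (by simpa using hs)
    (by simpa using hF) l f
  refine UniformOnFun.tendsto_iff_tendstoUniformlyOn.1 (hiff.2 ?_) s rfl
  exact tendsto_pi_nhds.2 fun x => hlim x (by simpa using x.2)

lemma tendstoLocallyUniformly_of_lipschitzWith {ι X Y : Type*} [PseudoMetricSpace X]
    [LocallyCompactSpace X] [PseudoMetricSpace Y] {F : ι → X → Y} {f : X → Y} {l : Filter ι}
    {L : ℝ≥0} (hF : ∀ i, LipschitzWith L (F i))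
    (hlim : ∀ x, Tendsto (fun i => F i x) l (𝓝 (f x))) : TendstoLocallyUniformly F f l :=
  tendstoLocallyUniformly_iff_forall_isCompact.2 fun s hs =>
    tendstoUniformlyOn_of_equicontinuousOn hs
      ((LipschitzWith.uniformEquicontinuous F L hF).equicontinuous.equicontinuousOn s)
      fun x _ => hlim x

section Convex

variable {V : Type*} [NormedAddCommGroup V] [NormedSpace ℝ V]

lemma add_fderiv_le_of_convexOn {g : V → ℝ} (hg : ConvexOn ℝ univ g) {y : V}
    (hd : DifferentiableAt ℝ g y) (z : V) : g y + fderiv ℝ g y (z - y) ≤ g z := by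
  have hline : ConvexOn ℝ univ (g ∘ AffineMap.lineMap (k := ℝ) y z) :=
    hg.comp_affineMap (AffineMap.lineMap y z)
  have hderiv : HasDerivAt (g ∘ AffineMap.lineMap (k := ℝ) y z) (fderiv ℝ g y (z - y)) 0 := by
    refine HasFDerivAt.comp_hasDerivAt 0 ?_ AffineMap.hasDerivAt_lineMap
    simpa using hd.hasFDerivAt
  have := hline.le_slope_of_hasDerivAt (mem_univ 0) (mem_univ 1) zero_lt_one hderiv
  simp only [slope_def_field, Function.comp_apply, AffineMap.lineMap_apply_one,
    AffineMap.lineMap_apply_zero] at this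
  linarith

lemma lipschitzOnWith_sub_of_convexOn {g : V → ℝ} {y : V} {r : ℝ} (hr : 0 < r)
    (hg : ConvexOn ℝ (Metric.ball y (2 * r)) g) (A : StrongDual ℝ V) (b : ℝ) {η : ℝ≥0}
    (hclose : ∀ z ∈ Metric.ball y (2 * r), |g z - (A z + b)| ≤ η * r) :
    LipschitzOnWith (2 * η) (fun z => g z - A z) (Metric.ball y r) := by
  have hconv : ConvexOn ℝ (Metric.ball y (2 * r)) (fun z => g z - A z - b) :=
    (hg.sub (A.toLinearMap.concaveOn hg.1)).sub (concaveOn_const b hg.1)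
  have hlip := hconv.lipschitzOnWith_of_abs_le (M := η * r) hr fun z hz => by
    simpa only [sub_sub] using hclose z hz
  have hconst : (2 * (η * r) / r).toNNReal = 2 * η := by
    rw [← mul_assoc, mul_div_cancel_right₀ _ hr.ne']
    exact Real.toNNReal_coe (r := 2 * η)
  rw [hconst, show 2 * r - r = r by ring] at hlip
  simpa only [LipschitzOnWith, edist_sub_right] using hlip

lemma exists_abs_sub_affine_le {g : V → ℝ} {y : V} (hd : DifferentiableAt ℝ g y) {η : ℝ≥0}
    (hη : 0 < η) : ∃ r > 0, ∀ z ∈ Metric.ball y (2 * r),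
      |g z - (fderiv ℝ g y z + (g y - fderiv ℝ g y y))| ≤ η * r := by
  obtain ⟨R, hR, hball⟩ := Metric.eventually_nhds_iff_ball.1
    (hd.hasFDerivAt.isLittleO.bound (half_pos (NNReal.coe_pos.2 hη)))
  refine ⟨R / 2, half_pos hR, fun z hz => ?_⟩
  rw [mul_div_cancel₀ R two_ne_zero] at hz
  have hzR : ‖z - y‖ ≤ R := (mem_ball_iff_norm.1 hz).le
  calc |g z - (fderiv ℝ g y z + (g y - fderiv ℝ g y y))|
      = ‖g z - g y - fderiv ℝ g y (z - y)‖ := by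
        rw [Real.norm_eq_abs, map_sub]; congr 1; ring
    _ ≤ η / 2 * ‖z - y‖ := hball z hz
    _ ≤ η / 2 * R := by gcongr
    _ = η * (R / 2) := by ring

variable {ι : Type*} {l : Filter ι} {g : ι → V → ℝ} {g₀ : V → ℝ}

/- Near `y` all the functions are uniformly close to the affine part of `g₀` at `y`, and a convex
function that is close to an affine one differs from it by a function of small Lipschitz
constant. -/
lemma exists_lipschitzOnWith_sub_of_convexOn [ProperSpace V] (hg : ∀ i, ConvexOn ℝ univ (g i))
    (hg₀ : ConvexOn ℝ univ g₀) (hlim : TendstoLocallyUniformly g g₀ l) {y : V}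
    (hd : DifferentiableAt ℝ g₀ y) {ε : ℝ≥0} (hε : 0 < ε) :
    ∃ r > 0, ∀ᶠ i in l, LipschitzOnWith ε (fun z => g i z - g₀ z) (Metric.ball y r) := by
  obtain ⟨r, hr, haff⟩ := exists_abs_sub_affine_le hd (η := ε / 8) (by positivity)
  refine ⟨r, hr, ?_⟩
  have hunif : ∀ᶠ i in l, ∀ z ∈ Metric.closedBall y (2 * r), dist (g₀ z) (g i z) < ε / 8 * r :=
    Metric.tendstoUniformlyOn_iff.1 (tendstoLocallyUniformly_iff_forall_isCompact.1 hlim _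
      (isCompact_closedBall y (2 * r))) _ (by positivity)
  have hlip : ∀ h : V → ℝ, ConvexOn ℝ univ h →
      (∀ z ∈ Metric.ball y (2 * r), |h z - g₀ z| ≤ ε / 8 * r) →
      LipschitzOnWith (2 * (ε / 4)) (fun z => h z - fderiv ℝ g₀ y z) (Metric.ball y r) := by
    refine fun h hh hclose => lipschitzOnWith_sub_of_convexOn hr
      (hh.subset (subset_univ _) (convex_ball _ _)) _ (g₀ y - fderiv ℝ g₀ y y) fun z hz => ?_
    have := (abs_sub_le _ _ _).trans (add_le_add (hclose z hz) (haff z hz))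
    push_cast at this ⊢
    linarith
  have hlip₀ := hlip g₀ hg₀ fun z _ => by simp only [sub_self, abs_zero]; positivity
  filter_upwards [hunif] with i hi
  have hlipᵢ := hlip (g i) (hg i) fun z hz => by
    rw [abs_sub_comm]
    exact (hi z (Metric.ball_subset_closedBall hz)).le
  have hsum : 2 * (ε / 4) + 2 * (ε / 4) = ε := by ext; push_cast; ring
  simpa only [sub_sub_sub_cancel_right, hsum] using hlipᵢ.sub hlip₀

lemma tendsto_fderiv_of_convexOn [ProperSpace V] (hg : ∀ i, ConvexOn ℝ univ (g i))
    (hg₀ : ConvexOn ℝ univ g₀) (hlim : TendstoLocallyUniformly g g₀ l) {y : V}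
    (hd : ∀ i, DifferentiableAt ℝ (g i) y) (hd₀ : DifferentiableAt ℝ g₀ y) :
    Tendsto (fun i => fderiv ℝ (g i) y) l (𝓝 (fderiv ℝ g₀ y)) := by
  rw [Metric.nhds_basis_closedBall.tendsto_right_iff]
  intro ε hε
  lift ε to ℝ≥0 using hε.le
  obtain ⟨r, hr, hev⟩ :=
    exists_lipschitzOnWith_sub_of_convexOn hg hg₀ hlim hd₀ (NNReal.coe_pos.1 hε)
  filter_upwards [hev] with i hi
  rw [mem_closedBall_iff_norm, ← fderiv_fun_sub (hd i) hd₀]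
  exact norm_fderiv_le_of_lipschitzOn ℝ (Metric.ball_mem_nhds y hr) hi

end Convex

/-! ### Area densities of Lipschitz parametrizations -/

/-- The distances that `φ` and `ψ` induce on `s` differ at most by the factor `c`. -/
def EDistComparableOn {α X : Type*} [PseudoEMetricSpace X] (c : ℝ≥0) (φ ψ : α → X) (s : Set α) :
    Prop :=
  ∀ a ∈ s, ∀ b ∈ s,
    edist (φ a) (φ b) ≤ c * edist (ψ a) (ψ b) ∧ edist (ψ a) (ψ b) ≤ c * edist (φ a) (φ b)

lemma EDistComparableOn.symm {α X : Type*} [PseudoEMetricSpace X] {c : ℝ≥0} {φ ψ : α → X}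
    {s : Set α} (h : EDistComparableOn c φ ψ s) : EDistComparableOn c ψ φ s :=
  fun a ha b hb => (h a ha b hb).symm

lemma EDistComparableOn.mono {α X : Type*} [PseudoEMetricSpace X] {c : ℝ≥0} {φ ψ : α → X}
    {s t : Set α} (h : EDistComparableOn c φ ψ t) (hst : s ⊆ t) : EDistComparableOn c φ ψ s :=
  fun a ha b hb => h a (hst ha) b (hst hb)

lemma EDistComparableOn.hausdorffMeasure_image_le {α X : Type*} [EMetricSpace X]
    [MeasurableSpace X] [BorelSpace X] {c : ℝ≥0} {φ ψ : α → X} {s : Set α}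
    (h : EDistComparableOn c φ ψ s) {d : ℝ} (hd : 0 ≤ d) :
    μH[d] (φ '' s) ≤ (c : ℝ≥0∞) ^ d * μH[d] (ψ '' s) := by
  rcases s.eq_empty_or_nonempty with rfl | ⟨a₀, -⟩
  · simp only [image_empty, measure_empty, zero_le]
  have : Nonempty α := ⟨a₀⟩
  have hmem : ∀ a ∈ s, Function.invFunOn ψ s (ψ a) ∈ s := fun a ha =>
    Function.invFunOn_mem ⟨a, ha, rfl⟩
  have hψ : ∀ a ∈ s, ψ (Function.invFunOn ψ s (ψ a)) = ψ a := fun a ha =>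
    Function.invFunOn_eq ⟨a, ha, rfl⟩
  have hlip : LipschitzOnWith c (φ ∘ Function.invFunOn ψ s) (ψ '' s) := by
    rintro _ ⟨a, ha, rfl⟩ _ ⟨b, hb, rfl⟩
    simpa only [Function.comp_apply, hψ a ha, hψ b hb] using (h _ (hmem a ha) _ (hmem b hb)).1
  have himage : (φ ∘ Function.invFunOn ψ s) '' (ψ '' s) = φ '' s := by
    rw [image_image]
    refine image_congr fun a ha => edist_le_zero.1 ?_
    simpa only [Function.comp_apply, hψ a ha, edist_self, mul_zero] using (h _ (hmem a ha) a ha).1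
  exact himage ▸ hlip.hausdorffMeasure_image_le hd

lemma tendsto_nhds_of_eventually_le_mul {ι : Type*} {l : Filter ι} {u : ι → ℝ≥0∞} {a : ℝ≥0∞}
    {c : ℕ → ℝ≥0∞} (hc : Tendsto c atTop (𝓝 1))
    (h : ∀ k, ∀ᶠ i in l, u i ≤ c k * a ∧ a ≤ c k * u i) : Tendsto u l (𝓝 a) := by
  have hca : ∀ b : ℝ≥0∞, Tendsto (fun k => c k * b) atTop (𝓝 b) := fun b => by
    simpa only [one_mul] using ENNReal.Tendsto.mul_const hc (Or.inl one_ne_zero)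
  refine tendsto_order.2 ⟨fun b hb => ?_, fun b hb => ?_⟩
  · obtain ⟨k, hk⟩ := ((hca b).eventually_lt_const hb).exists
    filter_upwards [h k] with i hi
    by_contra! hib
    exact (hi.2.trans (mul_le_mul_right hib (c k))).not_gt hk
  · obtain ⟨k, hk⟩ := ((hca a).eventually_lt_const hb).exists
    filter_upwards [h k] with i hi using hi.1.trans_lt hk

lemma ae_of_ae_exists_mem_nhds {X : Type*} [TopologicalSpace X] [SecondCountableTopology X]
    [MeasurableSpace X] {μ : Measure X} {p : X → Prop}
    (h : ∀ᵐ x ∂μ, ∃ u ∈ 𝓝 x, ∀ᵐ y ∂μ, y ∈ u → p y) : ∀ᵐ x ∂μ, p x := by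
  set D := {x | ∃ u ∈ 𝓝 x, ∀ᵐ y ∂μ, y ∈ u → p y}
  have hnull : μ {x | x ∈ D ∧ ¬ p x} = 0 := by
    refine measure_null_of_locally_null _ fun x hx => ?_
    obtain ⟨u, hu, hup⟩ := hx.1
    refine ⟨u ∩ {x | x ∈ D ∧ ¬ p x},
      inter_mem (mem_nhdsWithin_of_mem_nhds hu) self_mem_nhdsWithin, ?_⟩
    exact measure_mono_null (fun y hy => show ¬(y ∈ u → p y) from fun h => hy.2.2 (h hy.1))
      (ae_iff.1 hup)
  filter_upwards [h, measure_eq_zero_iff_ae_notMem.1 hnull] with x hxD hx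
  by_contra hpx
  exact hx ⟨hxD, hpx⟩

section AreaDensity

variable {V X : Type*} [NormedAddCommGroup V] [NormedSpace ℝ V] [MeasurableSpace V]
  [EMetricSpace X] [MeasurableSpace X] [BorelSpace X]

/-- The Jacobian of a parametrization `φ`, obtained without differentiating `φ`: the density, with
respect to the Hausdorff measure of `V` of dimension `finrank ℝ V`, of the pull-back under `φ` of
the Hausdorff measure of the same dimension. -/
def areaDensity [BorelSpace V] (φ : V → X) : V → ℝ≥0∞ :=
  (Measure.comap φ μH[Module.finrank ℝ V]).rnDeriv μH[Module.finrank ℝ V]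

variable [BorelSpace V]

lemma measurable_areaDensity (φ : V → X) : Measurable (areaDensity φ) :=
  Measure.measurable_rnDeriv _ _

variable [FiniteDimensional ℝ V] {φ ψ : V → X} {K L : ℝ≥0}

lemma measurableEmbedding_of_lipschitzWith (hφ : LipschitzWith K φ) (hinj : φ.Injective) :
    MeasurableEmbedding φ :=
  have := FiniteDimensional.proper_real V
  hφ.continuous.measurableEmbedding hinj

lemma comap_hausdorffMeasure_le (hφ : LipschitzWith K φ) (hinj : φ.Injective) :
    Measure.comap φ μH[Module.finrank ℝ V] ≤
      K ^ Module.finrank ℝ V • (μH[Module.finrank ℝ V] : Measure V) := by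
  refine fun s => ?_
  rw [(measurableEmbedding_of_lipschitzWith hφ hinj).comap_apply]
  simpa only [ENNReal.rpow_natCast, Measure.smul_apply, ENNReal.smul_def, smul_eq_mul,
    ENNReal.coe_pow] using hφ.hausdorffMeasure_image_le (Nat.cast_nonneg (Module.finrank ℝ V)) s

lemma withDensity_areaDensity (hφ : LipschitzWith K φ) (hinj : φ.Injective) :
    (μH[Module.finrank ℝ V] : Measure V).withDensity (areaDensity φ) =
      Measure.comap φ μH[Module.finrank ℝ V] := by
  have hle := comap_hausdorffMeasure_le hφ hinj
  have : SigmaFinite (Measure.comap φ μH[Module.finrank ℝ V]) := Measure.sigmaFinite_of_le _ hle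
  exact Measure.withDensity_rnDeriv_eq _ _
    (hle.absolutelyContinuous.trans Measure.smul_absolutelyContinuous)

lemma setLIntegral_areaDensity (hφ : LipschitzWith K φ) (hinj : φ.Injective) {s : Set V}
    (hs : MeasurableSet s) :
    ∫⁻ y in s, areaDensity φ y ∂μH[Module.finrank ℝ V] = μH[Module.finrank ℝ V] (φ '' s) := by
  rw [← withDensity_apply _ hs, withDensity_areaDensity hφ hinj,
    (measurableEmbedding_of_lipschitzWith hφ hinj).comap_apply]

lemma setLIntegral_image_eq_areaDensity (hφ : LipschitzWith K φ) (hinj : φ.Injective) {s : Set V}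
    (hs : MeasurableSet s) {F : X → ℝ≥0∞} (hF : Measurable (F ∘ φ)) :
    ∫⁻ x in φ '' s, F x ∂μH[Module.finrank ℝ V] =
      ∫⁻ y in s, areaDensity φ y * F (φ y) ∂μH[Module.finrank ℝ V] := by
  have hemb := measurableEmbedding_of_lipschitzWith hφ hinj
  calc ∫⁻ x in φ '' s, F x ∂μH[Module.finrank ℝ V]
      = ∫⁻ x in φ '' s, F x ∂((Measure.comap φ μH[Module.finrank ℝ V]).map φ) := by
        rw [hemb.map_comap, Measure.restrict_restrict (hemb.measurableSet_image.2 hs),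
          inter_eq_left.2 (image_subset_range φ s)]
    _ = ∫⁻ y in s, F (φ y) ∂(Measure.comap φ μH[Module.finrank ℝ V]) := by
        rw [hemb.restrict_map, hemb.lintegral_map, hemb.injective.preimage_image]
    _ = ∫⁻ y in s, areaDensity φ y * F (φ y) ∂μH[Module.finrank ℝ V] := by
        rw [← withDensity_areaDensity hφ hinj]
        exact setLIntegral_withDensity_eq_setLIntegral_mul _ (measurable_areaDensity φ) hF hs

lemma areaDensity_le (hφ : LipschitzWith K φ) (hinj : φ.Injective) :
    ∀ᵐ y ∂μH[Module.finrank ℝ V], areaDensity φ y ≤ (K ^ Module.finrank ℝ V : ℝ≥0) := by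
  refine ae_le_of_forall_setLIntegral_le_of_sigmaFinite (measurable_areaDensity φ) fun s hs _ => ?_
  rw [setLIntegral_areaDensity hφ hinj hs, setLIntegral_const]
  simpa only [ENNReal.rpow_natCast, ENNReal.coe_pow] using
    hφ.hausdorffMeasure_image_le (Nat.cast_nonneg (Module.finrank ℝ V)) s

lemma EDistComparableOn.areaDensity_le_mul {c : ℝ≥0} {B : Set V}
    (h : EDistComparableOn c φ ψ B) (hB : MeasurableSet B) (hφ : LipschitzWith K φ)
    (hφinj : φ.Injective) (hψ : LipschitzWith L ψ) (hψinj : ψ.Injective) :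
    ∀ᵐ y ∂μH[Module.finrank ℝ V], y ∈ B →
      areaDensity φ y ≤ c ^ Module.finrank ℝ V * areaDensity ψ y := by
  rw [← ae_restrict_iff' hB]
  refine ae_le_of_forall_setLIntegral_le_of_sigmaFinite (measurable_areaDensity φ) fun s hs _ => ?_
  rw [Measure.restrict_restrict hs, lintegral_const_mul _ (measurable_areaDensity ψ),
    setLIntegral_areaDensity hφ hφinj (hs.inter hB), setLIntegral_areaDensity hψ hψinj
      (hs.inter hB), ← ENNReal.rpow_natCast]
  exact (h.mono inter_subset_right).hausdorffMeasure_image_le (Nat.cast_nonneg _)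

variable {ι : Type*} [Countable ι] {l : Filter ι} {φ : ι → V → X} {φ₀ : V → X} {K : ι → ℝ≥0}
  {K₀ : ℝ≥0}

lemma ae_eventually_areaDensity_le_mul (hφ : ∀ i, LipschitzWith (K i) (φ i))
    (hinj : ∀ i, (φ i).Injective) (hφ₀ : LipschitzWith K₀ φ₀) (hinj₀ : φ₀.Injective) {c : ℝ≥0}
    (hcomp : ∀ᵐ y ∂μH[Module.finrank ℝ V], ∃ r > 0, ∀ᶠ i in l,
      EDistComparableOn c (φ i) φ₀ (Metric.ball y r)) :
    ∀ᵐ y ∂μH[Module.finrank ℝ V], ∀ᶠ i in l,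
      areaDensity (φ i) y ≤ c ^ Module.finrank ℝ V * areaDensity φ₀ y ∧
        areaDensity φ₀ y ≤ c ^ Module.finrank ℝ V * areaDensity (φ i) y := by
  refine ae_of_ae_exists_mem_nhds (hcomp.mono fun x ⟨r, hr, hev⟩ => ?_)
  refine ⟨Metric.ball x r, Metric.ball_mem_nhds x hr, ?_⟩
  have hball : MeasurableSet (Metric.ball x r) := Metric.isOpen_ball.measurableSet
  have hae : ∀ᵐ y ∂μH[Module.finrank ℝ V], ∀ i,
      EDistComparableOn c (φ i) φ₀ (Metric.ball x r) → y ∈ Metric.ball x r →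
      areaDensity (φ i) y ≤ c ^ Module.finrank ℝ V * areaDensity φ₀ y ∧
        areaDensity φ₀ y ≤ c ^ Module.finrank ℝ V * areaDensity (φ i) y := by
    refine ae_all_iff.2 fun i => eventually_imp_distrib_left.2 fun hi => ?_
    filter_upwards [hi.areaDensity_le_mul hball (hφ i) (hinj i) hφ₀ hinj₀,
      hi.symm.areaDensity_le_mul hball hφ₀ hinj₀ (hφ i) (hinj i)] with y hy hy₀ hyB
      using ⟨hy hyB, hy₀ hyB⟩
  filter_upwards [hae] with y hy hyB
  exact hev.mono fun i hi => hy i hi hyB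

lemma ae_tendsto_areaDensity (hφ : ∀ i, LipschitzWith (K i) (φ i))
    (hinj : ∀ i, (φ i).Injective) (hφ₀ : LipschitzWith K₀ φ₀) (hinj₀ : φ₀.Injective)
    (hcomp : ∀ c : ℝ≥0, 1 < c → ∀ᵐ y ∂μH[Module.finrank ℝ V], ∃ r > 0, ∀ᶠ i in l,
      EDistComparableOn c (φ i) φ₀ (Metric.ball y r)) :
    ∀ᵐ y ∂μH[Module.finrank ℝ V],
      Tendsto (fun i => areaDensity (φ i) y) l (𝓝 (areaDensity φ₀ y)) := by
  obtain ⟨c, -, hc1, hc⟩ := exists_seq_strictAnti_tendsto (1 : ℝ≥0)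
  have hpow : Tendsto (fun k => (c k : ℝ≥0∞) ^ Module.finrank ℝ V) atTop (𝓝 1) := by
    simpa only [← ENNReal.coe_pow, one_pow, ENNReal.coe_one] using
      ENNReal.tendsto_coe.2 (hc.pow (Module.finrank ℝ V))
  filter_upwards [ae_all_iff.2 fun k => ae_eventually_areaDensity_le_mul hφ hinj hφ₀ hinj₀
    (hcomp (c k) (hc1 k))] with y hy
  exact tendsto_nhds_of_eventually_le_mul hpow hy

end AreaDensity

/-! ### Graphs over the orthogonal complement of a direction -/

section Graph

variable {E : Type*} [NormedAddCommGroup E] [InnerProductSpace ℝ E] {v : E} {K : Set E}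
  {g h : (ℝ ∙ v)ᗮ → ℝ} {L : ℝ≥0}

lemma inner_orthogonal_add_smul (hv : ‖v‖ = 1) (y z : (ℝ ∙ v)ᗮ) (s t : ℝ) :
    ⟪(y : E) + s • v, (z : E) + t • v⟫ = ⟪y, z⟫ + s * t := by
  have hy := Submodule.mem_orthogonal_singleton_iff_inner_left.1 y.2
  have hz := Submodule.mem_orthogonal_singleton_iff_inner_right.1 z.2
  simp only [inner_add_left, inner_add_right, real_inner_smul_left, real_inner_smul_right, hy, hz,
    real_inner_self_eq_norm_sq, hv, Submodule.coe_inner]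
  ring

lemma inner_orthogonal_add_smul_self (hv : ‖v‖ = 1) (y : (ℝ ∙ v)ᗮ) (t : ℝ) :
    ⟪(y : E) + t • v, v⟫ = t := by
  simpa using inner_orthogonal_add_smul hv y 0 t 1

lemma exists_eq_orthogonal_add_smul (v x : E) :
    ∃ (y : (ℝ ∙ v)ᗮ) (t : ℝ), x = (y : E) + t • v := by
  obtain ⟨z, hz, y, hy, rfl⟩ := (ℝ ∙ v).exists_add_mem_mem_orthogonal x
  obtain ⟨t, rfl⟩ := Submodule.mem_span_singleton.1 hz
  exact ⟨⟨y, hy⟩, t, add_comm _ _⟩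

lemma norm_le_norm_orthogonal_add_smul (y : (ℝ ∙ v)ᗮ) (t : ℝ) : ‖y‖ ≤ ‖(y : E) + t • v‖ := by
  have hy : ⟪(y : E), t • v⟫ = 0 := by
    rw [real_inner_smul_right, Submodule.mem_orthogonal_singleton_iff_inner_left.1 y.2, mul_zero]
  have hpyth := norm_add_sq_eq_norm_sq_add_norm_sq_real hy
  rw [Submodule.coe_norm]
  exact abs_le_of_sq_le_sq' (by nlinarith [mul_self_nonneg ‖t • v‖]) (norm_nonneg _) |>.2

/-- The parametrization of the graph of `g` in the direction `v`. -/
def graphMap (v : E) (g : (ℝ ∙ v)ᗮ → ℝ) (y : (ℝ ∙ v)ᗮ) : E := y + g y • v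

lemma graphMap_sub_graphMap (a b : (ℝ ∙ v)ᗮ) :
    graphMap v g a - graphMap v g b = ((a - b : (ℝ ∙ v)ᗮ) : E) + (g a - g b) • v := by
  simp only [graphMap, Submodule.coe_sub]
  module

lemma norm_sub_le_norm_graphMap_sub (a b : (ℝ ∙ v)ᗮ) :
    ‖a - b‖ ≤ ‖graphMap v g a - graphMap v g b‖ :=
  graphMap_sub_graphMap a b ▸ norm_le_norm_orthogonal_add_smul (a - b) (g a - g b)

lemma injective_graphMap (v : E) (g : (ℝ ∙ v)ᗮ → ℝ) : (graphMap v g).Injective := by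
  refine fun a b hab => sub_eq_zero.1 (norm_le_zero_iff.1 ?_)
  simpa only [hab, sub_self, norm_zero] using norm_sub_le_norm_graphMap_sub (g := g) a b

lemma lipschitzWith_graphMap (hv : ‖v‖ = 1) (hg : LipschitzWith L g) :
    LipschitzWith (1 + L) (graphMap v g) := by
  have hsmul : LipschitzWith 1 fun t : ℝ => t • v :=
    LipschitzWith.of_dist_le_mul fun s t => by
      rw [dist_eq_norm, ← sub_smul, norm_smul, hv, mul_one, NNReal.coe_one, one_mul, dist_eq_norm]
  exact one_mul L ▸ (LipschitzWith.subtype_val _).add (hsmul.comp hg)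

lemma edist_graphMap_le {ε : ℝ≥0} {s : Set (ℝ ∙ v)ᗮ} (hv : ‖v‖ = 1)
    (hgh : LipschitzOnWith ε (fun z => g z - h z) s) {a b : (ℝ ∙ v)ᗮ} (ha : a ∈ s) (hb : b ∈ s) :
    edist (graphMap v g a) (graphMap v g b) ≤
      (1 + ε : ℝ≥0) * edist (graphMap v h a) (graphMap v h b) := by
  have hdist : dist (graphMap v g a) (graphMap v g b) ≤
      (1 + ε : ℝ≥0) * dist (graphMap v h a) (graphMap v h b) :=
    calc dist (graphMap v g a) (graphMap v g b)
        = ‖(graphMap v h a - graphMap v h b) + ((g a - h a) - (g b - h b)) • v‖ := by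
          rw [dist_eq_norm, graphMap_sub_graphMap, graphMap_sub_graphMap]
          congr 1
          module
      _ ≤ ‖graphMap v h a - graphMap v h b‖ + ε * ‖a - b‖ := by
          refine norm_add_le_of_le le_rfl ?_
          rw [norm_smul, hv, mul_one, ← dist_eq_norm, ← dist_eq_norm]
          exact hgh.dist_le_mul a ha b hb
      _ ≤ (1 + ε : ℝ≥0) * dist (graphMap v h a) (graphMap v h b) := by
          rw [NNReal.coe_add, NNReal.coe_one, add_mul, one_mul, dist_eq_norm]
          gcongr
          exact norm_sub_le_norm_graphMap_sub a b
  rwa [edist_nndist, edist_nndist, ← ENNReal.coe_mul, ENNReal.coe_le_coe, ← NNReal.coe_le_coe]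

lemma eDistComparableOn_graphMap {ε : ℝ≥0} {s : Set (ℝ ∙ v)ᗮ} (hv : ‖v‖ = 1)
    (hgh : LipschitzOnWith ε (fun z => g z - h z) s) :
    EDistComparableOn (1 + ε) (graphMap v g) (graphMap v h) s := by
  have hhg : LipschitzOnWith ε (fun z => h z - g z) s := by
    simpa only [Pi.neg_def, neg_sub] using hgh.neg
  exact fun a ha b hb => ⟨edist_graphMap_le hv hgh ha hb, edist_graphMap_le hv hhg ha hb⟩

/-- `K` is the epigraph of the function `g` in the direction `v`. -/
def IsEpigraph (v : E) (K : Set E) (g : (ℝ ∙ v)ᗮ → ℝ) : Prop :=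
  ∀ (y : (ℝ ∙ v)ᗮ) (t : ℝ), (y : E) + t • v ∈ K ↔ g y ≤ t

/-- `K` is stable under translation by the vectors of the cone `{z + t • v | L * ‖z‖ ≤ t}`. -/
def AbsorbsCone (L : ℝ≥0) (v : E) (K : Set E) : Prop :=
  ∀ x ∈ K, ∀ (z : E) (t : ℝ), L * ‖z‖ ≤ t → x + (z + t • v) ∈ K

namespace IsEpigraph

lemma graphMap_mem (hg : IsEpigraph v K g) (y : (ℝ ∙ v)ᗮ) : graphMap v g y ∈ K :=
  (hg y (g y)).2 le_rfl

lemma convexOn (hg : IsEpigraph v K g) (hK : Convex ℝ K) : ConvexOn ℝ univ g := by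
  refine ⟨convex_univ, fun x _ y _ a b ha hb hab => (hg _ _).1 ?_⟩
  convert hK (hg.graphMap_mem x) (hg.graphMap_mem y) ha hb hab using 1
  simp only [graphMap, Submodule.coe_add, Submodule.coe_smul, smul_eq_mul]
  module

lemma le_add_mul_of_dist_le (hg : IsEpigraph v K g) (hL : AbsorbsCone L v K) {y : (ℝ ∙ v)ᗮ}
    {s ε : ℝ} {x : E} (hx : x ∈ K) (hε : dist ((y : E) + s • v) x ≤ ε) : g y ≤ s + L * ε := by
  refine (hg _ _).1 ?_
  convert hL x hx ((y : E) + s • v - x) (L * ε) (by rw [← dist_eq_norm]; gcongr) using 1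
  module

lemma lipschitzWith (hg : IsEpigraph v K g) (hL : AbsorbsCone L v K) : LipschitzWith L g := by
  refine LipschitzWith.of_le_add_mul L fun x y => ?_
  refine hg.le_add_mul_of_dist_le hL (hg.graphMap_mem y) (le_of_eq ?_)
  rw [graphMap, dist_add_right, ← Subtype.dist_eq]

lemma mem_interior (hg : IsEpigraph v K g) (hL : AbsorbsCone L v K) {y : (ℝ ∙ v)ᗮ} {t : ℝ}
    (ht : g y < t) : (y : E) + t • v ∈ interior K := by
  have hnear : ∀ᶠ x in 𝓝 ((y : E) + t • v), L * ‖x - (y + t • v)‖ < t - g y := by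
    refine ContinuousAt.eventually_lt (by fun_prop) continuousAt_const ?_
    simpa only [sub_self, norm_zero, mul_zero, sub_pos] using ht
  refine mem_interior_iff_mem_nhds.2 (hnear.mono fun x hx => ?_)
  have hmem := hL _ (hg.graphMap_mem y) _ _ hx.le
  rwa [show graphMap v g y + (x - (y + t • v) + (t - g y) • v) = x by
    simp only [graphMap]; module] at hmem

lemma frontier_eq (hg : IsEpigraph v K g) (hL : AbsorbsCone L v K) (hK : IsClosed K) :
    frontier K = range (graphMap v g) := by
  refine subset_antisymm (fun x hx => ?_) ?_
  · obtain ⟨y, t, rfl⟩ := exists_eq_orthogonal_add_smul v x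
    have hle : g y ≤ t := (hg y t).1 (hK.frontier_subset hx)
    have hge : ¬ g y < t := fun hlt => hx.2 (hg.mem_interior hL hlt)
    exact ⟨y, by rw [graphMap, hle.eq_of_not_lt hge]⟩
  · rintro _ ⟨y, rfl⟩
    rw [frontier_eq_closure_inter_closure]
    refine ⟨subset_closure (hg.graphMap_mem y), ?_⟩
    have hlim : Tendsto (fun t : ℝ => (y : E) + t • v) (𝓝[<] (g y)) (𝓝 (graphMap v g y)) :=
      (by fun_prop : Continuous fun t : ℝ => (y : E) + t • v).continuousWithinAt
    refine mem_closure_of_tendsto hlim ?_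
    filter_upwards [self_mem_nhdsWithin] with t ht using fun hmem => ((hg y t).1 hmem).not_gt ht

end IsEpigraph

/-- The function whose epigraph in the direction `v` is `K`, provided that `K` is closed upwards
and contains a lowest point over each point of the hyperplane. -/
def heightFn (v : E) (K : Set E) (y : (ℝ ∙ v)ᗮ) : ℝ := sInf {t : ℝ | (y : E) + t • v ∈ K}

lemma isEpigraph_heightFn (hv : ‖v‖ = 1) (hK : IsClosed K) (hne : K.Nonempty)
    (hL : AbsorbsCone L v K) (hpos : ∀ x ∈ K, 0 ≤ ⟪x, v⟫) : IsEpigraph v K (heightFn v K) := by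
  intro y t
  have hbdd : BddBelow {t : ℝ | (y : E) + t • v ∈ K} :=
    ⟨0, fun s hs => inner_orthogonal_add_smul_self hv y s ▸ hpos _ hs⟩
  have hclosed : IsClosed {t : ℝ | (y : E) + t • v ∈ K} := hK.preimage (by fun_prop)
  have hnonempty : {t : ℝ | (y : E) + t • v ∈ K}.Nonempty := by
    obtain ⟨x, hx⟩ := hne
    refine ⟨L * ‖(y : E) - x‖, show (y : E) + _ ∈ K from ?_⟩
    simpa only [← add_assoc, add_sub_cancel] using hL x hx (y - x) _ le_rfl
  refine ⟨fun ht => csInf_le hbdd ht, fun ht => ?_⟩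
  convert hL _ (hclosed.csInf_mem hnonempty hbdd) 0 (t - heightFn v K y)
    (by simpa only [norm_zero, mul_zero, sub_nonneg] using ht) using 1
  simp only [heightFn]
  module

variable [CompleteSpace E]

/-- The downward unit normal vector of the graph of `g`. -/
def graphNormal (v : E) (g : (ℝ ∙ v)ᗮ → ℝ) (y : (ℝ ∙ v)ᗮ) : E :=
  NormedSpace.normalize ((↑(gradient g y) : E) - v)

lemma gradient_sub_ne_zero (hv : ‖v‖ = 1) (y : (ℝ ∙ v)ᗮ) : (↑(gradient g y) : E) - v ≠ 0 := by
  intro hzero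
  have hinner := inner_orthogonal_add_smul_self hv (gradient g y) (-1)
  rw [neg_one_smul, ← sub_eq_add_neg, hzero, inner_zero_left] at hinner
  norm_num at hinner

lemma norm_graphNormal (hv : ‖v‖ = 1) (y : (ℝ ∙ v)ᗮ) : ‖graphNormal v g y‖ = 1 :=
  NormedSpace.norm_normalize_eq_one_iff.2 (gradient_sub_ne_zero hv y)

lemma measurable_graphNormal [MeasurableSpace E] [BorelSpace E] [SecondCountableTopology E]
    (v : E) (g : (ℝ ∙ v)ᗮ → ℝ) : Measurable (graphNormal v g) := by
  have hgrad : Measurable (gradient g) :=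
    (InnerProductSpace.toDual ℝ _).symm.continuous.measurable.comp (measurable_fderiv ℝ g)
  have hdiff : Measurable fun y => (↑(gradient g y) : E) - v := hgrad.subtype_coe.sub_const v
  exact hdiff.norm.inv.smul hdiff

lemma tendsto_graphNormal {ι : Type*} {l : Filter ι} {g : ι → (ℝ ∙ v)ᗮ → ℝ}
    {g₀ : (ℝ ∙ v)ᗮ → ℝ} {y : (ℝ ∙ v)ᗮ} (hv : ‖v‖ = 1)
    (hlim : Tendsto (fun i => fderiv ℝ (g i) y) l (𝓝 (fderiv ℝ g₀ y))) :
    Tendsto (fun i => graphNormal v (g i) y) l (𝓝 (graphNormal v g₀ y)) := by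
  have hgrad : Tendsto (fun i => gradient (g i) y) l (𝓝 (gradient g₀ y)) :=
    ((InnerProductSpace.toDual ℝ _).symm.continuous.tendsto _).comp hlim
  have hdiff : Tendsto (fun i => (↑(gradient (g i) y) : E) - v) l
      (𝓝 ((↑(gradient g₀ y) : E) - v)) :=
    ((continuous_subtype_val.tendsto _).comp hgrad).sub_const v
  exact (hdiff.norm.inv₀ (norm_ne_zero_iff.2 (gradient_sub_ne_zero hv y))).smul hdiff

end Graph

section Normals

variable {n : ℕ} {v : En n} {K : Set (En n)} {g : (ℝ ∙ v)ᗮ → ℝ} {y : (ℝ ∙ v)ᗮ}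

lemma inner_orthogonal_add_smul_gradient_sub (hv : ‖v‖ = 1) (z : (ℝ ∙ v)ᗮ) (t : ℝ) :
    ⟪(z : En n) + t • v, (↑(gradient g y) : En n) - v⟫ = fderiv ℝ g y z - t := by
  have hinner := inner_orthogonal_add_smul hv z (gradient g y) t (-1)
  rw [real_inner_comm (gradient g y) z, inner_gradient_left] at hinner
  rw [sub_eq_add_neg, ← neg_one_smul ℝ v, hinner]
  ring

lemma graphNormal_mem_normalsAt (hv : ‖v‖ = 1) (hK : IsEpigraph v K g) (hg : ConvexOn ℝ univ g)
    (hd : DifferentiableAt ℝ g y) : graphNormal v g y ∈ normalsAt n K (graphMap v g y) := by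
  refine ⟨norm_graphNormal hv y, fun x hx => ?_⟩
  obtain ⟨z, t, rfl⟩ := exists_eq_orthogonal_add_smul v x
  have hsubgrad := add_fderiv_le_of_convexOn hg hd z
  rw [map_sub] at hsubgrad
  simp only [graphNormal, graphMap, NormedSpace.normalize, real_inner_smul_right,
    inner_orthogonal_add_smul_gradient_sub hv]
  have ht := (hK z t).1 hx
  exact mul_le_mul_of_nonneg_left (by linarith) (inv_nonneg.2 (norm_nonneg _))

lemma exists_eq_smul_of_mem_normalsAt (hv : ‖v‖ = 1) (hK : IsEpigraph v K g)
    (hd : DifferentiableAt ℝ g y) {u : En n} (hu : u ∈ normalsAt n K (graphMap v g y)) :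
    ∃ s : ℝ, 0 ≤ s ∧ u = s • ((↑(gradient g y) : En n) - v) := by
  obtain ⟨b, s, rfl⟩ := exists_eq_orthogonal_add_smul v u
  have hmax : ∀ (z : (ℝ ∙ v)ᗮ) (t : ℝ), g z ≤ t → ⟪b, z⟫ + s * t ≤ ⟪b, y⟫ + s * g y := by
    intro z t hzt
    have hle := hu.2 _ ((hK z t).2 hzt)
    simpa only [graphMap, inner_orthogonal_add_smul hv, real_inner_comm b, mul_comm _ s] using hle
  have hs : s ≤ 0 := by linarith [hmax y (g y + 1) (by linarith)]
  have hderiv : HasFDerivAt (fun z => ⟪b, z⟫ + s * g z) (innerSL ℝ b + s • fderiv ℝ g y) y :=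
    (innerSL ℝ b).hasFDerivAt.add (hd.hasFDerivAt.const_mul s)
  have hcrit : innerSL ℝ b + s • fderiv ℝ g y = 0 :=
    IsLocalMax.hasFDerivAt_eq_zero (Eventually.of_forall fun z => hmax z (g z) le_rfl) hderiv
  have hb : b = -s • gradient g y := by
    refine ext_inner_right ℝ fun z => ?_
    have hz : ⟪b, z⟫ + s * fderiv ℝ g y z = 0 := DFunLike.congr_fun hcrit z
    rw [real_inner_smul_left, inner_gradient_left]
    linarith
  refine ⟨-s, by linarith, ?_⟩
  rw [hb, Submodule.coe_smul]
  module

lemma normalsAt_graphMap (hv : ‖v‖ = 1) (hK : IsEpigraph v K g) (hg : ConvexOn ℝ univ g)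
    (hd : DifferentiableAt ℝ g y) : normalsAt n K (graphMap v g y) = {graphNormal v g y} := by
  refine subset_antisymm (fun u hu => ?_)
    (singleton_subset_iff.2 (graphNormal_mem_normalsAt hv hK hg hd))
  obtain ⟨s, hs, hus⟩ := exists_eq_smul_of_mem_normalsAt hv hK hd hu
  have hs0 : s ≠ 0 := by
    rintro rfl
    simpa only [hus, zero_smul, norm_zero, zero_ne_one] using hu.1
  rw [mem_singleton_iff, ← NormedSpace.normalize_eq_self_of_norm_eq_one hu.1, hus,
    NormedSpace.normalize_smul_of_pos (hs.lt_of_ne' hs0), graphNormal]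

end Normals

/-! ### Pseudo-cones -/

section HausdorffDist

variable {E : Type*} [NormedAddCommGroup E] [InnerProductSpace ℝ E] {v : E} {K K₀ S T : Set E}
  {g g₀ : (ℝ ∙ v)ᗮ → ℝ} {L : ℝ≥0} {y : (ℝ ∙ v)ᗮ} {s t η : ℝ}

lemma IsEpigraph.le_add_mul_of_hausdorffDist_lt (hg : IsEpigraph v K g) (hL : AbsorbsCone L v K)
    (hS : (y : E) + s • v ∈ S) (hT : T ⊆ K) (hdist : Metric.hausdorffDist S T < η)
    (hfin : Metric.hausdorffEDist S T ≠ ⊤) : g y ≤ s + L * η := by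
  obtain ⟨x, hx, hlt⟩ := Metric.exists_dist_lt_of_hausdorffDist_lt hS hdist hfin
  exact hg.le_add_mul_of_dist_le hL (hT hx) hlt.le

lemma IsEpigraph.dist_le_of_hausdorffDist_lt (hv : ‖v‖ = 1) (hg : IsEpigraph v K g)
    (hL : AbsorbsCone L v K) (hg₀ : IsEpigraph v K₀ g₀) (hL₀ : AbsorbsCone L v K₀) (hη : 0 ≤ η)
    (ht : g₀ y + L * η ≤ t)
    (hdist : Metric.hausdorffDist (K ∩ {x | ⟪x, v⟫ ≤ t}) (K₀ ∩ {x | ⟪x, v⟫ ≤ t}) < η)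
    (hfin : Metric.hausdorffEDist (K ∩ {x | ⟪x, v⟫ ≤ t}) (K₀ ∩ {x | ⟪x, v⟫ ≤ t}) ≠ ⊤) :
    dist (g y) (g₀ y) ≤ L * η := by
  have hLη : 0 ≤ L * η := by positivity
  have hmem : ∀ {K' : Set E} {g' : (ℝ ∙ v)ᗮ → ℝ}, IsEpigraph v K' g' → g' y ≤ t →
      (y : E) + g' y • v ∈ K' ∩ {x | ⟪x, v⟫ ≤ t} := fun hg' hle =>
    ⟨hg'.graphMap_mem y, (inner_orthogonal_add_smul_self hv y _).trans_le hle⟩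
  have hle : g y ≤ g₀ y + L * η := by
    rw [Metric.hausdorffDist_comm] at hdist
    rw [Metric.hausdorffEDist_comm] at hfin
    exact hg.le_add_mul_of_hausdorffDist_lt hL (hmem hg₀ (by linarith)) inter_subset_left hdist hfin
  have hge : g₀ y ≤ g y + L * η :=
    hg₀.le_add_mul_of_hausdorffDist_lt hL₀ (hmem hg (hle.trans ht)) inter_subset_left hdist hfin
  exact abs_sub_le_iff.2 ⟨by linarith, by linarith⟩

end HausdorffDist

section PseudoCone

variable {n : ℕ} {C K K₀ ϖ : Set (En n)} {v x u : En n}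

lemma exists_forall_inner_le_neg_mul_norm {s : Set (En n)} (hs : IsCompact s)
    (hsub : s ⊆ interior (dualCone n C)) : ∃ c > 0, ∀ u ∈ s, ∀ x ∈ C, ⟪x, u⟫ ≤ -(c * ‖x‖) := by
  obtain ⟨δ, hδ, hthick⟩ := hs.exists_cthickening_subset_open isOpen_interior hsub
  refine ⟨δ, hδ, fun u hu x hx => ?_⟩
  have hunit : ‖NormedSpace.normalize x‖ ≤ 1 := by
    by_cases hx0 : x = 0
    · simp only [hx0, NormedSpace.normalize_zero_eq_zero, norm_zero, zero_le_one]
    · exact (NormedSpace.norm_normalize_eq_one_iff.2 hx0).le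
  have hmem : u + δ • NormedSpace.normalize x ∈ dualCone n C := by
    refine interior_subset (hthick (Metric.mem_cthickening_of_dist_le _ u _ _ hu ?_))
    rw [dist_eq_norm, add_sub_cancel_left, norm_smul, Real.norm_of_nonneg hδ.le]
    exact mul_le_of_le_one_right hδ.le hunit
  have hinner := hmem x hx
  rw [inner_add_left, real_inner_smul_left, real_inner_comm x u, NormedSpace.normalize,
    real_inner_smul_left, real_inner_self_eq_norm_mul_norm, ← mul_assoc ‖x‖⁻¹] at hinner
  have hself : ‖x‖⁻¹ * ‖x‖ * ‖x‖ = ‖x‖ := by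
    by_cases h : ‖x‖ = 0 <;> simp [h]
  rw [hself] at hinner
  linarith

lemma exists_mul_norm_le_inner (hv : -v ∈ interior (dualCone n C)) :
    ∃ c > 0, ∀ x ∈ C, c * ‖x‖ ≤ ⟪x, v⟫ := by
  obtain ⟨c, hc, hle⟩ :=
    exists_forall_inner_le_neg_mul_norm isCompact_singleton (singleton_subset_iff.2 hv)
  refine ⟨c, hc, fun x hx => ?_⟩
  simpa only [inner_neg_right, neg_le_neg_iff] using hle _ rfl x hx

lemma inner_neg_of_mem_interior_dualCone (hu : u ∈ interior (dualCone n C)) (hx : x ∈ C \ {0}) :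
    ⟪x, u⟫ < 0 := by
  obtain ⟨c, hc, hle⟩ :=
    exists_forall_inner_le_neg_mul_norm isCompact_singleton (singleton_subset_iff.2 hu)
  exact (hle u rfl x hx.1).trans_lt (neg_neg_of_pos (mul_pos hc (norm_pos_iff.2 hx.2)))

lemma isBounded_Cminus (hv : -v ∈ interior (dualCone n C)) (t : ℝ) :
    Bornology.IsBounded (Cminus n C v t) := by
  obtain ⟨c, hc, hle⟩ := exists_mul_norm_le_inner hv
  refine isBounded_iff_forall_norm_le.2 ⟨t / c, fun x hx => ?_⟩
  exact (le_div_iff₀' hc).2 ((hle x hx.1).trans hx.2)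

lemma exists_forall_absorbsCone (hv : v ∈ interior C) :
    ∃ L : ℝ≥0, ∀ K, IsCPseudoCone n C K → AbsorbsCone L v K := by
  obtain ⟨δ, hδ, hball⟩ := Metric.mem_nhds_iff.1 (mem_interior_iff_mem_nhds.1 hv)
  refine ⟨Real.toNNReal (2 / δ), fun K hK x hx z t hzt => ?_⟩
  rw [Real.coe_toNNReal _ (by positivity)] at hzt
  have hz : ‖z‖ ≤ t * (δ / 2) := by
    calc ‖z‖ = 2 / δ * ‖z‖ * (δ / 2) := by field_simp
      _ ≤ t * (δ / 2) := by gcongr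
  have ht : 0 ≤ t := (by positivity : 0 ≤ 2 / δ * ‖z‖).trans hzt
  rcases ht.eq_or_lt with rfl | ht
  · have hz0 : z = 0 := norm_le_zero_iff.1 (by simpa only [zero_mul] using hz)
    simpa only [hz0, zero_smul, add_zero] using hx
  · have hmem : v + t⁻¹ • z ∈ recCone n K := by
      refine hK.2 ▸ hball ?_
      rw [Metric.mem_ball, dist_eq_norm, add_sub_cancel_left, norm_smul, norm_inv,
        Real.norm_of_nonneg ht.le, inv_mul_lt_iff₀ ht]
      nlinarith
    have hadd := hmem x hx t ht.le
    rwa [smul_add, smul_inv_smul₀ ht.ne', add_comm (t • v)] at hadd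

namespace IsCPseudoCone

lemma subset (hK : IsCPseudoCone n C K) : K ⊆ C := by
  obtain ⟨⟨-, -, hconvex, -, hscale⟩, hrec⟩ := hK
  refine fun x hx => hrec ▸ fun y hy t ht => ?_
  have hmem : (1 + t)⁻¹ • y + (t * (1 + t)⁻¹) • x ∈ K :=
    hconvex hy hx (by positivity) (by positivity) (by field_simp)
  convert hscale (1 + t) (by linarith) (smul_mem_smul_set hmem) using 1
  match_scalars <;> field_simp

lemma smul_mem (hK : IsCPseudoCone n C K) (hx : x ∈ C) {r : ℝ} (hr : 0 ≤ r) : r • x ∈ C := by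
  rw [← hK.2] at hx ⊢
  intro y hy t ht
  simpa only [smul_smul] using hx y hy (t * r) (mul_nonneg ht hr)

lemma isClosed_cone (hK : IsCPseudoCone n C K) : IsClosed C := by
  have hclosed : IsClosed (recCone n K) := by
    simp only [recCone, Set.ofPred_forall]
    exact isClosed_iInter fun x => isClosed_iInter fun _ => isClosed_iInter fun t =>
      isClosed_iInter fun _ => hK.1.2.1.preimage (by fun_prop)
  exact hK.2 ▸ hclosed

lemma zero_notMem (hK : IsCPseudoCone n C K) : (0 : En n) ∉ K := hK.1.2.2.2.1

lemma mem_sdiff_zero (hK : IsCPseudoCone n C K) (hx : x ∈ K) : x ∈ C \ {0} :=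
  ⟨hK.subset hx, ne_of_mem_of_not_mem hx hK.zero_notMem⟩

lemma inter_Cminus (hK : IsCPseudoCone n C K) (t : ℝ) :
    K ∩ Cminus n C v t = K ∩ {x | ⟪x, v⟫ ≤ t} := by
  rw [Cminus, ← inter_assoc, inter_eq_left.2 hK.subset]

lemma isEpigraph_heightFn {L : ℝ≥0} (hK : IsCPseudoCone n C K) (hv : ‖v‖ = 1)
    (hvdual : -v ∈ interior (dualCone n C)) (hL : AbsorbsCone L v K) :
    IsEpigraph v K (heightFn v K) := by
  obtain ⟨c, hc, hle⟩ := exists_mul_norm_le_inner hvdual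
  refine _root_.isEpigraph_heightFn hv hK.1.2.1 hK.1.1 hL fun x hx => ?_
  exact (by positivity : 0 ≤ c * ‖x‖).trans (hle x (hK.subset hx))

end IsCPseudoCone

namespace CDetermined

lemma exists_forall_inner_le_of_notMem (hK : CDetermined n C ϖ K) (hϖ : ϖ ⊆ dualCone n C)
    (hx : x ∈ C) (hxK : x ∉ K) : ∃ w ∈ ϖ, ∀ y ∈ K, ⟪y, w⟫ ≤ ⟪x, w⟫ := by
  rw [hK.2] at hxK
  simp only [mem_inter_iff, hx, true_and, mem_iInter, not_forall, mem_ofPred_eq, not_le] at hxK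
  obtain ⟨w, hw, hlt⟩ := hxK
  have hbdd : BddAbove ((fun y => ⟪y, w⟫) '' K) := by
    refine ⟨0, forall_mem_image.2 fun y hy => ?_⟩
    exact real_inner_comm w y ▸ hϖ hw y (hK.1.subset hy)
  exact ⟨w, hw, fun y hy => (le_csSup hbdd (mem_image_of_mem _ hy)).trans hlt.le⟩

lemma exists_mem_normalsAt (hK : CDetermined n C ϖ K) (hϖc : IsCompact ϖ)
    (hϖ : ϖ ⊆ omegaDual n C) (hx : x ∈ K) (hout : ∀ r ∈ Ioo (0 : ℝ) 1, r • x ∉ K) :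
    ∃ w ∈ ϖ, w ∈ normalsAt n K x := by
  obtain ⟨r, -, hr, hrlim⟩ := exists_seq_strictMono_tendsto' (zero_lt_one : (0 : ℝ) < 1)
  have hsep : ∀ k, ∃ w ∈ ϖ, ∀ y ∈ K, ⟪y, w⟫ ≤ ⟪r k • x, w⟫ := fun k =>
    hK.exists_forall_inner_le_of_notMem (fun w hw => interior_subset (hϖ hw).2)
      (hK.1.smul_mem (hK.1.subset hx) (hr k).1.le) (hout _ (hr k))
  choose w hw hwle using hsep
  obtain ⟨w₀, hw₀, φ, hφ, hlim⟩ := hϖc.tendsto_subseq hw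
  refine ⟨w₀, hw₀, mem_sphere_zero_iff_norm.1 (hϖ hw₀).1, fun y hy => ?_⟩
  have hrx : Tendsto (fun k => r (φ k) • x) atTop (𝓝 x) := by
    simpa only [one_smul, Function.comp_apply] using (hrlim.comp hφ.tendsto_atTop).smul_const x
  exact le_of_tendsto_of_tendsto' (tendsto_const_nhds.inner hlim) (hrx.inner hlim)
    fun k => hwle (φ k) y hy

lemma mem_of_normalsAt_eq_singleton (hK : CDetermined n C ϖ K) (hϖc : IsCompact ϖ)
    (hϖ : ϖ ⊆ omegaDual n C) (hx : x ∈ K) (hnormal : normalsAt n K x = {u})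
    (hu : u ∈ omegaDual n C) : u ∈ ϖ := by
  have hneg : ⟪x, u⟫ < 0 := inner_neg_of_mem_interior_dualCone hu.2 (hK.1.mem_sdiff_zero hx)
  have hout : ∀ r ∈ Ioo (0 : ℝ) 1, r • x ∉ K := fun r hr hmem => by
    have hle := (hnormal.symm ▸ mem_singleton u : u ∈ normalsAt n K x).2 _ hmem
    rw [real_inner_smul_left] at hle
    nlinarith [hr.2]
  obtain ⟨w, hw, hwn⟩ := hK.exists_mem_normalsAt hϖc hϖ hx hout
  rw [hnormal] at hwn
  exact mem_singleton_iff.1 hwn ▸ hw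

end CDetermined

lemma exists_forall_norm_le_of_mem_normalsAt (hϖc : IsCompact ϖ) (hϖ : ϖ ⊆ omegaDual n C)
    (hv : -v ∈ interior (dualCone n C)) (t : ℝ) :
    ∃ R, ∀ K ⊆ C, (K ∩ Cminus n C v t).Nonempty →
      ∀ x ∈ K, ∀ u ∈ ϖ, u ∈ normalsAt n K x → ‖x‖ ≤ R := by
  obtain ⟨c, hc, hinner⟩ := exists_forall_inner_le_neg_mul_norm hϖc fun u hu => (hϖ hu).2
  obtain ⟨R, hR⟩ := isBounded_iff_forall_norm_le.1 (isBounded_Cminus hv t)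
  refine ⟨R / c, fun K hKC ⟨z, hzK, hzt⟩ x hx u hu hux => (le_div_iff₀' hc).2 ?_⟩
  have hzu := (abs_le.1 (abs_real_inner_le_norm z u)).1
  rw [hux.1, mul_one] at hzu
  linarith [hR z hzt, hux.2 z hzK, hinner u hu x (hKC hx)]

/-- Convergence of `C`-pseudo-cones: Hausdorff convergence of the truncations `K i ∩ C⁻(t)` for all
`t > t₀`, where `t₀` is such that the truncations at `t₀` are nonempty. -/
def TendstoPseudoCone {ι : Type*} (n : ℕ) (C : Set (En n)) (v : En n) (K : ι → Set (En n))
    (l : Filter ι) (K₀ : Set (En n)) : Prop :=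
  ∃ t₀ > (0 : ℝ), (∀ i, (K i ∩ Cminus n C v t₀).Nonempty) ∧ (K₀ ∩ Cminus n C v t₀).Nonempty ∧
    ∀ t > t₀, Tendsto
      (fun i => Metric.hausdorffDist (K i ∩ Cminus n C v t) (K₀ ∩ Cminus n C v t)) l (𝓝 0)

lemma hausdorffEDist_inter_Cminus_ne_top (hv : -v ∈ interior (dualCone n C)) {t₀ t : ℝ}
    (ht : t₀ ≤ t) (hK : (K ∩ Cminus n C v t₀).Nonempty) (hK₀ : (K₀ ∩ Cminus n C v t₀).Nonempty) :
    Metric.hausdorffEDist (K ∩ Cminus n C v t) (K₀ ∩ Cminus n C v t) ≠ ⊤ := by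
  have hmono : Cminus n C v t₀ ⊆ Cminus n C v t := fun x hx => ⟨hx.1, le_trans hx.2 ht⟩
  exact Metric.hausdorffEDist_ne_top_of_nonempty_of_bounded
    (hK.mono (inter_subset_inter_right _ hmono)) (hK₀.mono (inter_subset_inter_right _ hmono))
    ((isBounded_Cminus hv t).subset inter_subset_right)
    ((isBounded_Cminus hv t).subset inter_subset_right)

variable {ι : Type*} {l : Filter ι} {K : ι → Set (En n)}

lemma tendsto_heightFn (hv : ‖v‖ = 1) (hvC : v ∈ interior C)
    (hvdual : -v ∈ interior (dualCone n C)) (hK : ∀ i, IsCPseudoCone n C (K i))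
    (hK₀ : IsCPseudoCone n C K₀) (hconv : TendstoPseudoCone n C v K l K₀) (y : (ℝ ∙ v)ᗮ) :
    Tendsto (fun i => heightFn v (K i) y) l (𝓝 (heightFn v K₀ y)) := by
  obtain ⟨t₀, -, hne, hne₀, hlim⟩ := hconv
  obtain ⟨L, hL⟩ := exists_forall_absorbsCone hvC
  refine Metric.tendsto_nhds.2 fun ε hε => ?_
  set η : ℝ := min 1 ε / (L + 1) with hη_def
  have hη : 0 < η := by positivity
  have hLη : L * η < min 1 ε := by
    rw [hη_def, mul_div_assoc', div_lt_iff₀ (by positivity)]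
    nlinarith [lt_min one_pos hε]
  set t := max t₀ (heightFn v K₀ y) + 1
  have ht₀ : t₀ < t := (le_max_left _ _).trans_lt (lt_add_one _)
  have hty : heightFn v K₀ y + L * η ≤ t :=
    add_le_add (le_max_right _ _) (hLη.le.trans (min_le_left _ _))
  filter_upwards [(hlim t ht₀).eventually_lt_const hη] with i hi
  have hfin := hausdorffEDist_inter_Cminus_ne_top hvdual ht₀.le (hne i) hne₀
  rw [(hK i).inter_Cminus, hK₀.inter_Cminus] at hi hfin
  have hdist := ((hK i).isEpigraph_heightFn hv hvdual (hL _ (hK i))).dist_le_of_hausdorffDist_lt hv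
    (hL _ (hK i)) (hK₀.isEpigraph_heightFn hv hvdual (hL _ hK₀)) (hL _ hK₀) hη.le hty hi hfin
  exact hdist.trans_lt (hLη.trans_le (min_le_right _ _))

end PseudoCone

/-! ### Convergence of convex graphs -/

section ConvexGraphs

variable {E : Type*} [NormedAddCommGroup E] [InnerProductSpace ℝ E] [FiniteDimensional ℝ E]
  [MeasurableSpace E] [BorelSpace E] {v : E} {ι : Type*} [Countable ι] {l : Filter ι}
  {g : ι → (ℝ ∙ v)ᗮ → ℝ} {g₀ : (ℝ ∙ v)ᗮ → ℝ} {L : ℝ≥0}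

lemma ae_tendsto_areaDensity_graphMap (hv : ‖v‖ = 1) (hg : ∀ i, ConvexOn ℝ univ (g i))
    (hg₀ : ConvexOn ℝ univ g₀) (hL : ∀ i, LipschitzWith L (g i)) (hL₀ : LipschitzWith L g₀)
    (hlim : ∀ y, Tendsto (fun i => g i y) l (𝓝 (g₀ y))) :
    ∀ᵐ y ∂μH[Module.finrank ℝ (ℝ ∙ v)ᗮ],
      Tendsto (fun i => areaDensity (graphMap v (g i)) y) l
        (𝓝 (areaDensity (graphMap v g₀) y)) := by
  have := FiniteDimensional.proper_real (ℝ ∙ v)ᗮ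
  refine ae_tendsto_areaDensity (fun i => lipschitzWith_graphMap hv (hL i))
    (fun i => injective_graphMap v (g i)) (lipschitzWith_graphMap hv hL₀)
    (injective_graphMap v g₀) fun c hc => ?_
  obtain ⟨ε, hε, rfl⟩ := exists_pos_add_of_lt' hc
  filter_upwards [hL₀.ae_differentiableAt (μ := μH[Module.finrank ℝ (ℝ ∙ v)ᗮ])] with y hd
  obtain ⟨r, hr, hev⟩ := exists_lipschitzOnWith_sub_of_convexOn hg hg₀
    (tendstoLocallyUniformly_of_lipschitzWith hL hlim) hd hε
  exact ⟨r, hr, hev.mono fun i hi => eDistComparableOn_graphMap hv hi⟩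

lemma ae_tendsto_graphNormal (hv : ‖v‖ = 1) (hg : ∀ i, ConvexOn ℝ univ (g i))
    (hg₀ : ConvexOn ℝ univ g₀) (hL : ∀ i, LipschitzWith L (g i)) (hL₀ : LipschitzWith L g₀)
    (hlim : ∀ y, Tendsto (fun i => g i y) l (𝓝 (g₀ y))) :
    ∀ᵐ y ∂μH[Module.finrank ℝ (ℝ ∙ v)ᗮ],
      Tendsto (fun i => graphNormal v (g i) y) l (𝓝 (graphNormal v g₀ y)) := by
  have := FiniteDimensional.proper_real (ℝ ∙ v)ᗮ
  filter_upwards [ae_all_iff.2 fun i => (hL i).ae_differentiableAt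
    (μ := μH[Module.finrank ℝ (ℝ ∙ v)ᗮ]), hL₀.ae_differentiableAt] with y hd hd₀
  exact tendsto_graphNormal hv (tendsto_fderiv_of_convexOn hg hg₀
    (tendstoLocallyUniformly_of_lipschitzWith hL hlim) hd hd₀)

end ConvexGraphs

/-! ### Weighted surface area measures of graphs -/

section SurfaceArea

variable {n : ℕ} {C K ω : Set (En n)} {v : En n} {Θ : En n → ℝ} {g : (ℝ ∙ v)ᗮ → ℝ} {L : ℝ≥0}

lemma natCast_finrank_orthogonal (hv : ‖v‖ = 1) :
    (Module.finrank ℝ (ℝ ∙ v)ᗮ : ℝ) = (n : ℝ) - 1 := by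
  have hsum := (ℝ ∙ v).finrank_add_finrank_orthogonal
  rw [finrank_span_singleton (norm_ne_zero_iff.1 (hv ▸ one_ne_zero)), finrank_euclideanSpace_fin]
    at hsum
  exact eq_sub_of_add_eq' (by exact_mod_cast hsum)

lemma hausdorffMeasure_graphMap_image_not_differentiableAt (hv : ‖v‖ = 1)
    (hg : LipschitzWith L g) :
    μH[Module.finrank ℝ (ℝ ∙ v)ᗮ] (graphMap v g '' {y | ¬DifferentiableAt ℝ g y}) = 0 := by
  refine le_antisymm (((lipschitzWith_graphMap hv hg).hausdorffMeasure_image_le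
    (Nat.cast_nonneg _) _).trans (le_of_eq ?_)) zero_le
  rw [ae_iff.1 hg.ae_differentiableAt, mul_zero]

lemma nuInv_ae_eq_image_graphMap (hv : ‖v‖ = 1) (hKc : IsClosed K) (hKconv : Convex ℝ K)
    (hL : AbsorbsCone L v K) (hg : IsEpigraph v K g) (ω : Set (En n)) :
    nuInv n K ω =ᵐ[μH[Module.finrank ℝ (ℝ ∙ v)ᗮ]] graphMap v g '' (graphNormal v g ⁻¹' ω) := by
  have hnull := hausdorffMeasure_graphMap_image_not_differentiableAt hv (hg.lipschitzWith hL)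
  filter_upwards [measure_eq_zero_iff_ae_notMem.1 hnull] with x hx
  have hnormal : ∀ y, graphMap v g y = x → normalsAt n K (graphMap v g y) = {graphNormal v g y} :=
    fun y hy => normalsAt_graphMap hv hg (hg.convexOn hKconv) (by_contra fun hd => hx ⟨y, hd, hy⟩)
  refine propext ⟨?_, ?_⟩
  · rintro ⟨hxK, u, hu, hxu⟩
    obtain ⟨y, rfl⟩ := hg.frontier_eq hL hKc ▸ hxK
    have hNu : u = graphNormal v g y := singleton_injective (hxu.symm.trans (hnormal y rfl))
    exact ⟨y, mem_preimage.2 (hNu ▸ hu), rfl⟩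
  · rintro ⟨y, hy, rfl⟩
    exact ⟨hg.frontier_eq hL hKc ▸ mem_range_self y, _, hy, hnormal y rfl⟩

lemma surfTheta_eq_setLIntegral (hv : ‖v‖ = 1) (hKc : IsClosed K) (hKconv : Convex ℝ K)
    (hL : AbsorbsCone L v K) (hg : IsEpigraph v K g) (hΘ : Continuous (Θ ∘ graphMap v g))
    (hω : MeasurableSet ω) :
    surfTheta n Θ K ω = ∫⁻ y in graphNormal v g ⁻¹' ω,
      areaDensity (graphMap v g) y * ENNReal.ofReal (Θ (graphMap v g y))
        ∂μH[Module.finrank ℝ (ℝ ∙ v)ᗮ] := by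
  rw [surfTheta, ← natCast_finrank_orthogonal hv,
    setLIntegral_congr (nuInv_ae_eq_image_graphMap hv hKc hKconv hL hg ω)]
  exact setLIntegral_image_eq_areaDensity (F := fun x => ENNReal.ofReal (Θ x))
    (lipschitzWith_graphMap hv (hg.lipschitzWith hL)) (injective_graphMap v g)
    (measurable_graphNormal v g hω) hΘ.measurable.ennreal_ofReal

/-- The density, in the parametrization of `∂K` as the graph of `g`, of the `Θ`-weighted area of
the boundary points whose normal vector lies in `Ω_{C°}`. -/
def surfDensity (n : ℕ) (C : Set (En n)) (Θ : En n → ℝ) (v : En n) (g : (ℝ ∙ v)ᗮ → ℝ) :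
    (ℝ ∙ v)ᗮ → ℝ≥0∞ :=
  indicator (graphNormal v g ⁻¹' omegaDual n C) fun y =>
    areaDensity (graphMap v g) y * ENNReal.ofReal (Θ (graphMap v g y))

lemma measurableSet_omegaDual (n : ℕ) (C : Set (En n)) : MeasurableSet (omegaDual n C) :=
  Metric.isClosed_sphere.measurableSet.inter isOpen_interior.measurableSet

lemma measurable_surfDensity (C : Set (En n)) (hΘ : Continuous (Θ ∘ graphMap v g)) :
    Measurable (surfDensity n C Θ v g) :=
  ((measurable_areaDensity _).mul hΘ.measurable.ennreal_ofReal).indicator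
    (measurable_graphNormal v g (measurableSet_omegaDual n C))

lemma surfDensity_le (C : Set (En n)) (Θ : En n → ℝ) (hv : ‖v‖ = 1) (hg : LipschitzWith L g) :
    ∀ᵐ y ∂μH[Module.finrank ℝ (ℝ ∙ v)ᗮ], surfDensity n C Θ v g y ≤
      ((1 + L) ^ Module.finrank ℝ (ℝ ∙ v)ᗮ : ℝ≥0) * ENNReal.ofReal (Θ (graphMap v g y)) := by
  filter_upwards [areaDensity_le (lipschitzWith_graphMap hv hg) (injective_graphMap v g)] with y hy
  exact (indicator_le_self _ _ y).trans (by gcongr)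

lemma surfDensity_lt_top (C : Set (En n)) (Θ : En n → ℝ) (hv : ‖v‖ = 1)
    (hg : LipschitzWith L g) :
    ∀ᵐ y ∂μH[Module.finrank ℝ (ℝ ∙ v)ᗮ], surfDensity n C Θ v g y < ∞ :=
  (surfDensity_le C Θ hv hg).mono fun _ hy =>
    hy.trans_lt (ENNReal.mul_lt_top ENNReal.coe_lt_top ENNReal.ofReal_lt_top)

lemma RepsSurf.eq_map_withDensity {μ : Measure (En n)} (hμ : RepsSurf n C Θ K μ) (hv : ‖v‖ = 1)
    (hKc : IsClosed K) (hKconv : Convex ℝ K) (hL : AbsorbsCone L v K) (hg : IsEpigraph v K g)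
    (hΘ : Continuous (Θ ∘ graphMap v g)) :
    μ = (μH[Module.finrank ℝ (ℝ ∙ v)ᗮ].withDensity (surfDensity n C Θ v g)).map
      (graphNormal v g) := by
  have hΩ := measurableSet_omegaDual n C
  have hN := measurable_graphNormal v g
  ext ω hω
  rw [← measure_inter_conull hμ.1, hμ.2 _ (hω.inter hΩ) inter_subset_right,
    surfTheta_eq_setLIntegral hv hKc hKconv hL hg hΘ (hω.inter hΩ), Measure.map_apply hN hω,
    withDensity_apply _ (hN hω), surfDensity, setLIntegral_indicator (hN hΩ), preimage_inter,
    inter_comm]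

lemma RepsSurf.integral_eq_of_isEpigraph {μ : Measure (En n)} (hμ : RepsSurf n C Θ K μ)
    (hv : ‖v‖ = 1) (hKc : IsClosed K) (hKconv : Convex ℝ K) (hL : AbsorbsCone L v K)
    (hg : IsEpigraph v K g) (hΘ : Continuous (Θ ∘ graphMap v g)) {f : En n → ℝ}
    (hf : Continuous f) :
    ∫ x, f x ∂μ = ∫ y, (surfDensity n C Θ v g y).toReal * f (graphNormal v g y)
      ∂μH[Module.finrank ℝ (ℝ ∙ v)ᗮ] := by
  rw [hμ.eq_map_withDensity hv hKc hKconv hL hg hΘ,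
    integral_map (measurable_graphNormal v g).aemeasurable hf.aestronglyMeasurable,
    integral_withDensity_eq_integral_toReal_smul (measurable_surfDensity C hΘ)
      (surfDensity_lt_top C Θ hv (hg.lipschitzWith hL))]
  rfl

end SurfaceArea

/-! ### Weak convergence -/

section WeakConvergence

variable {n : ℕ} {C K K₀ ϖ : Set (En n)} {v : En n} {Θ : En n → ℝ} {L : ℝ≥0}

namespace IsEpigraph

variable {g : (ℝ ∙ v)ᗮ → ℝ}

lemma pos (hg : IsEpigraph v K g) (hK : IsCPseudoCone n C K) (hv : ‖v‖ = 1)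
    (hvdual : -v ∈ interior (dualCone n C)) (y : (ℝ ∙ v)ᗮ) : 0 < g y := by
  have hneg := inner_neg_of_mem_interior_dualCone hvdual (hK.mem_sdiff_zero (hg.graphMap_mem y))
  rwa [inner_neg_right, neg_neg_iff_pos, graphMap, inner_orthogonal_add_smul_self hv] at hneg

lemma apply_zero_le_mul_norm (hg : IsEpigraph v K g) (hL : AbsorbsCone L v K) {x : En n}
    (hx : x ∈ K) : g 0 ≤ L * ‖x‖ := by
  simpa using hg.le_add_mul_of_dist_le (y := 0) (s := 0) hL hx le_rfl

lemma graphNormal_mem_of_cDetermined (hg : IsEpigraph v K g) (hK : CDetermined n C ϖ K)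
    (hv : ‖v‖ = 1) (hϖc : IsCompact ϖ) (hϖ : ϖ ⊆ omegaDual n C) {y : (ℝ ∙ v)ᗮ}
    (hd : DifferentiableAt ℝ g y) (hN : graphNormal v g y ∈ omegaDual n C) :
    graphNormal v g y ∈ ϖ :=
  hK.mem_of_normalsAt_eq_singleton hϖc hϖ (hg.graphMap_mem y)
    (normalsAt_graphMap hv hg (hg.convexOn hK.1.1.2.2.1) hd) hN

end IsEpigraph

lemma IsCPseudoCone.continuous_comp_graphMap (hK : IsCPseudoCone n C K) (hv : ‖v‖ = 1)
    (hvC : v ∈ interior C) (hvdual : -v ∈ interior (dualCone n C))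
    (hΘ : ContinuousOn Θ (C \ {0})) : Continuous (Θ ∘ graphMap v (heightFn v K)) := by
  obtain ⟨L, hL⟩ := exists_forall_absorbsCone hvC
  have hepi := hK.isEpigraph_heightFn hv hvdual (hL _ hK)
  exact hΘ.comp_continuous (lipschitzWith_graphMap hv (hepi.lipschitzWith (hL _ hK))).continuous
    fun y => hK.mem_sdiff_zero (hepi.graphMap_mem y)

lemma RepsSurf.integral_eq {μ : Measure (En n)} (hμ : RepsSurf n C Θ K μ)
    (hK : IsCPseudoCone n C K) (hv : ‖v‖ = 1) (hvC : v ∈ interior C)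
    (hvdual : -v ∈ interior (dualCone n C)) (hΘ : ContinuousOn Θ (C \ {0})) {f : En n → ℝ}
    (hf : Continuous f) :
    ∫ x, f x ∂μ = ∫ y, (surfDensity n C Θ v (heightFn v K) y).toReal *
      f (graphNormal v (heightFn v K) y) ∂μH[Module.finrank ℝ (ℝ ∙ v)ᗮ] := by
  obtain ⟨L, hL⟩ := exists_forall_absorbsCone hvC
  exact hμ.integral_eq_of_isEpigraph hv hK.1.2.1 hK.1.2.2.1 (hL _ hK)
    (hK.isEpigraph_heightFn hv hvdual (hL _ hK)) (hK.continuous_comp_graphMap hv hvC hvdual hΘ) hf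

lemma exists_forall_le_of_continuousOn (hC : IsClosed C) (hΘ : ContinuousOn Θ (C \ {0})) {b : ℝ}
    (hb : 0 < b) (L : ℝ≥0) (R : ℝ) : ∃ M, ∀ x ∈ C, b ≤ L * ‖x‖ → ‖x‖ ≤ R → Θ x ≤ M := by
  have hcompact : IsCompact (C ∩ {x | b ≤ L * ‖x‖} ∩ Metric.closedBall 0 R) :=
    (isCompact_closedBall 0 R).inter_left (hC.inter (isClosed_le (by fun_prop) (by fun_prop)))
  have hsub : C ∩ {x | b ≤ L * ‖x‖} ∩ Metric.closedBall 0 R ⊆ C \ {0} := fun x hx =>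
    ⟨hx.1.1, norm_pos_iff.1 (pos_of_mul_pos_right (hb.trans_le hx.1.2) L.2)⟩
  obtain ⟨M, hM⟩ := hcompact.bddAbove_image (hΘ.mono hsub)
  exact ⟨M, fun x hx hbx hxR => hM ⟨x, ⟨⟨hx, hbx⟩, mem_closedBall_zero_iff.2 hxR⟩, rfl⟩⟩

lemma ae_surfDensity_le_indicator (hK : CDetermined n C ϖ K) {g : (ℝ ∙ v)ᗮ → ℝ}
    (hg : IsEpigraph v K g) (hL : AbsorbsCone L v K) (hv : ‖v‖ = 1) (hϖc : IsCompact ϖ)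
    (hϖ : ϖ ⊆ omegaDual n C) {R M : ℝ}
    (hR : ∀ x ∈ K, ∀ u ∈ ϖ, u ∈ normalsAt n K x → ‖x‖ ≤ R)
    (hM : ∀ x ∈ K, ‖x‖ ≤ R → Θ x ≤ M) :
    ∀ᵐ y ∂μH[Module.finrank ℝ (ℝ ∙ v)ᗮ], (surfDensity n C Θ v g y).toReal ≤
      indicator (Metric.closedBall 0 R) (fun _ =>
        (((1 + L) ^ Module.finrank ℝ (ℝ ∙ v)ᗮ * M.toNNReal : ℝ≥0) : ℝ)) y := by
  filter_upwards [surfDensity_le C Θ hv (hg.lipschitzWith hL),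
    (hg.lipschitzWith hL).ae_differentiableAt] with y hle hd
  by_cases hN : graphNormal v g y ∈ omegaDual n C
  · have hnormal := normalsAt_graphMap hv hg (hg.convexOn hK.1.1.2.2.1) hd
    have hnorm : ‖graphMap v g y‖ ≤ R := hR _ (hg.graphMap_mem y) _
      (hg.graphNormal_mem_of_cDetermined hK hv hϖc hϖ hd hN) (hnormal ▸ mem_singleton _)
    rw [indicator_of_mem (mem_closedBall_zero_iff.2
      ((norm_le_norm_orthogonal_add_smul y _).trans hnorm))]
    refine ENNReal.toReal_le_coe_of_le_coe (hle.trans ?_)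
    rw [ENNReal.coe_mul]
    gcongr
    exact ENNReal.ofReal_le_ofReal (hM _ (hg.graphMap_mem y) hnorm)
  · rw [surfDensity, indicator_of_notMem (by exact hN), ENNReal.toReal_zero]
    exact indicator_nonneg (fun _ _ => NNReal.coe_nonneg _) y

lemma tendsto_surfDensity {ι : Type*} {l : Filter ι} (hΘ : ContinuousOn Θ (C \ {0}))
    (hv : ‖v‖ = 1) (hϖc : IsClosed ϖ) (hϖ : ϖ ⊆ omegaDual n C) {g : ι → (ℝ ∙ v)ᗮ → ℝ}
    {g₀ : (ℝ ∙ v)ᗮ → ℝ} {y : (ℝ ∙ v)ᗮ} (hmem : ∀ i, graphMap v (g i) y ∈ C \ {0})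
    (hmem₀ : graphMap v g₀ y ∈ C \ {0})
    (hNmem : ∀ i, graphNormal v (g i) y ∈ omegaDual n C → graphNormal v (g i) y ∈ ϖ)
    (hg : Tendsto (fun i => g i y) l (𝓝 (g₀ y)))
    (hN : Tendsto (fun i => graphNormal v (g i) y) l (𝓝 (graphNormal v g₀ y)))
    (harea : Tendsto (fun i => areaDensity (graphMap v (g i)) y) l
      (𝓝 (areaDensity (graphMap v g₀) y)))
    (hfin : areaDensity (graphMap v g₀) y ≠ ∞) :
    Tendsto (fun i => surfDensity n C Θ v (g i) y) l (𝓝 (surfDensity n C Θ v g₀ y)) := by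
  by_cases hN₀ : graphNormal v g₀ y ∈ omegaDual n C
  · have hev : ∀ᶠ i in l, graphNormal v (g i) y ∈ omegaDual n C :=
      (hN.eventually (isOpen_interior.mem_nhds hN₀.2)).mono fun i hi =>
        ⟨mem_sphere_zero_iff_norm.2 (norm_graphNormal hv y), hi⟩
    have hmap : Tendsto (fun i => graphMap v (g i) y) l (𝓝[C \ {0}] graphMap v g₀ y) :=
      tendsto_nhdsWithin_iff.2 ⟨(hg.smul_const v).const_add _, Eventually.of_forall hmem⟩
    have hprod := ENNReal.Tendsto.mul harea (Or.inr ENNReal.ofReal_ne_top)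
      (ENNReal.tendsto_ofReal ((hΘ _ hmem₀).tendsto.comp hmap)) (Or.inr hfin)
    rw [surfDensity, indicator_of_mem (mem_preimage.2 hN₀)]
    exact hprod.congr' (hev.mono fun i hi => (indicator_of_mem (mem_preimage.2 hi) _).symm)
  · have hev : ∀ᶠ i in l, graphNormal v (g i) y ∉ omegaDual n C := by
      refine by_contra fun hfreq => hN₀ (hϖ ?_)
      exact hϖc.mem_of_frequently_of_tendsto (Frequently.mono hfreq hNmem) hN
    rw [surfDensity, indicator_of_notMem (by exact hN₀)]
    exact tendsto_const_nhds.congr'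
      (hev.mono fun i hi => (indicator_of_notMem (by exact hi) _).symm)

variable {ι : Type*} {l : Filter ι} {K : ι → Set (En n)}

lemma ae_tendsto_surfDensity [Countable ι] (hv : ‖v‖ = 1) (hvC : v ∈ interior C)
    (hvdual : -v ∈ interior (dualCone n C)) (hΘ : ContinuousOn Θ (C \ {0})) (hϖc : IsCompact ϖ)
    (hϖ : ϖ ⊆ omegaDual n C) (hK : ∀ i, CDetermined n C ϖ (K i)) (hK₀ : IsCPseudoCone n C K₀)
    (hconv : TendstoPseudoCone n C v K l K₀) :
    ∀ᵐ y ∂μH[Module.finrank ℝ (ℝ ∙ v)ᗮ],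
      Tendsto (fun i => graphNormal v (heightFn v (K i)) y) l
          (𝓝 (graphNormal v (heightFn v K₀) y)) ∧
        Tendsto (fun i => (surfDensity n C Θ v (heightFn v (K i)) y).toReal) l
          (𝓝 (surfDensity n C Θ v (heightFn v K₀) y).toReal) := by
  obtain ⟨L, hL⟩ := exists_forall_absorbsCone hvC
  have hepi : ∀ i, IsEpigraph v (K i) (heightFn v (K i)) := fun i =>
    (hK i).1.isEpigraph_heightFn hv hvdual (hL _ (hK i).1)
  have hepi₀ := hK₀.isEpigraph_heightFn hv hvdual (hL _ hK₀)
  have hlip : ∀ i, LipschitzWith L (heightFn v (K i)) := fun i =>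
    (hepi i).lipschitzWith (hL _ (hK i).1)
  have hlip₀ := hepi₀.lipschitzWith (hL _ hK₀)
  have hconvex : ∀ i, ConvexOn ℝ univ (heightFn v (K i)) := fun i =>
    (hepi i).convexOn (hK i).1.1.2.2.1
  have hconvex₀ := hepi₀.convexOn hK₀.1.2.2.1
  have hlim := tendsto_heightFn hv hvC hvdual (fun i => (hK i).1) hK₀ hconv
  filter_upwards [ae_tendsto_graphNormal hv hconvex hconvex₀ hlip hlip₀ hlim,
    ae_tendsto_areaDensity_graphMap hv hconvex hconvex₀ hlip hlip₀ hlim,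
    areaDensity_le (lipschitzWith_graphMap hv hlip₀) (injective_graphMap v _),
    surfDensity_lt_top C Θ hv hlip₀,
    ae_all_iff.2 fun i => (hlip i).ae_differentiableAt] with y hN harea hle hfin hd
  refine ⟨hN, (ENNReal.tendsto_toReal hfin.ne).comp <| tendsto_surfDensity hΘ hv hϖc.isClosed hϖ
    (fun i => (hK i).1.mem_sdiff_zero ((hepi i).graphMap_mem y))
    (hK₀.mem_sdiff_zero (hepi₀.graphMap_mem y)) (fun i => ?_) (hlim y) hN harea
    (hle.trans_lt ENNReal.coe_lt_top).ne⟩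
  exact (hepi i).graphNormal_mem_of_cDetermined (hK i) hv hϖc hϖ (hd i)

lemma exists_eventually_ae_surfDensity_le_indicator (hv : ‖v‖ = 1) (hvC : v ∈ interior C)
    (hvdual : -v ∈ interior (dualCone n C)) (hΘ : ContinuousOn Θ (C \ {0})) (hϖc : IsCompact ϖ)
    (hϖ : ϖ ⊆ omegaDual n C) (hK : ∀ i, CDetermined n C ϖ (K i)) (hK₀ : IsCPseudoCone n C K₀)
    (hconv : TendstoPseudoCone n C v K l K₀) :
    ∃ R M : ℝ, ∀ᶠ i in l, ∀ᵐ y ∂μH[Module.finrank ℝ (ℝ ∙ v)ᗮ],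
      (surfDensity n C Θ v (heightFn v (K i)) y).toReal ≤
        indicator (Metric.closedBall 0 R) (fun _ => M) y := by
  obtain ⟨L, hL⟩ := exists_forall_absorbsCone hvC
  have hepi : ∀ i, IsEpigraph v (K i) (heightFn v (K i)) := fun i =>
    (hK i).1.isEpigraph_heightFn hv hvdual (hL _ (hK i).1)
  have hpos : 0 < heightFn v K₀ 0 :=
    (hK₀.isEpigraph_heightFn hv hvdual (hL _ hK₀)).pos hK₀ hv hvdual 0
  have hlim := tendsto_heightFn hv hvC hvdual (fun i => (hK i).1) hK₀ hconv 0
  obtain ⟨t₀, -, hne, -⟩ := hconv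
  obtain ⟨R, hR⟩ := exists_forall_norm_le_of_mem_normalsAt hϖc hϖ hvdual t₀
  obtain ⟨M, hM⟩ := exists_forall_le_of_continuousOn hK₀.isClosed_cone hΘ (half_pos hpos) L R
  refine ⟨R, ((1 + L) ^ Module.finrank ℝ (ℝ ∙ v)ᗮ * M.toNNReal : ℝ≥0), ?_⟩
  filter_upwards [hlim.eventually_const_lt (half_lt_self hpos)] with i hi
  exact ae_surfDensity_le_indicator (hK i) (hepi i) (hL _ (hK i).1) hv hϖc hϖ
    (hR _ (hK i).1.subset (hne i)) fun x hx => hM x ((hK i).1.subset hx)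
      (hi.le.trans ((hepi i).apply_zero_le_mul_norm (hL _ (hK i).1) hx))

lemma tendsto_integral_surfDensity [Countable ι] [l.IsCountablyGenerated] (hv : ‖v‖ = 1)
    (hvC : v ∈ interior C) (hvdual : -v ∈ interior (dualCone n C)) (hΘ : ContinuousOn Θ (C \ {0}))
    (hϖc : IsCompact ϖ) (hϖ : ϖ ⊆ omegaDual n C) (hK : ∀ i, CDetermined n C ϖ (K i))
    (hK₀ : IsCPseudoCone n C K₀) (hconv : TendstoPseudoCone n C v K l K₀)
    (f : BoundedContinuousFunction (En n) ℝ) :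
    Tendsto (fun i => ∫ y, (surfDensity n C Θ v (heightFn v (K i)) y).toReal *
        f (graphNormal v (heightFn v (K i)) y) ∂μH[Module.finrank ℝ (ℝ ∙ v)ᗮ]) l
      (𝓝 (∫ y, (surfDensity n C Θ v (heightFn v K₀) y).toReal *
        f (graphNormal v (heightFn v K₀) y) ∂μH[Module.finrank ℝ (ℝ ∙ v)ᗮ])) := by
  obtain ⟨R, M, hdom⟩ :=
    exists_eventually_ae_surfDensity_le_indicator hv hvC hvdual hΘ hϖc hϖ hK hK₀ hconv
  refine tendsto_integral_filter_of_dominated_convergence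
    (fun y => indicator (Metric.closedBall 0 R) (fun _ => M) y * ‖f‖) ?_ ?_ ?_ ?_
  · exact Eventually.of_forall fun i =>
      ((measurable_surfDensity C ((hK i).1.continuous_comp_graphMap hv hvC hvdual hΘ)
        ).ennreal_toReal.mul
          (f.continuous.measurable.comp (measurable_graphNormal v _))).aestronglyMeasurable
  · refine hdom.mono fun i hi => hi.mono fun y hy => ?_
    rw [norm_mul, Real.norm_of_nonneg ENNReal.toReal_nonneg]
    gcongr
    exacts [ENNReal.toReal_nonneg.trans hy, f.norm_coe_le_norm _]
  · exact ((integrable_indicator_iff Metric.isClosed_closedBall.measurableSet).2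
      (integrableOn_const (isCompact_closedBall 0 R).measure_lt_top.ne)).mul_const _
  · filter_upwards [ae_tendsto_surfDensity hv hvC hvdual hΘ hϖc hϖ hK hK₀ hconv] with y hlim
    exact hlim.2.mul ((f.continuous.tendsto _).comp hlim.1)

theorem statement11_general [Countable ι] [l.IsCountablyGenerated] (hv : ‖v‖ = 1)
    (hvC : v ∈ interior C) (hvdual : -v ∈ interior (dualCone n C))
    (hΘ : ContinuousOn Θ (C \ {0}) ∧ ∀ x ∈ C \ {0}, 0 ≤ Θ x)
    (hϖc : IsCompact ϖ) (hϖ : ϖ ⊆ omegaDual n C) (hK : ∀ i, CDetermined n C ϖ (K i))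
    (hK₀ : IsCPseudoCone n C K₀) (hconv : TendstoPseudoCone n C v K l K₀)
    {μ : ι → Measure (En n)} {μ₀ : Measure (En n)} (hμ : ∀ i, RepsSurf n C Θ (K i) (μ i))
    (hμ₀ : RepsSurf n C Θ K₀ μ₀) (f : BoundedContinuousFunction (En n) ℝ) :
    Tendsto (fun i => ∫ x, f x ∂μ i) l (𝓝 (∫ x, f x ∂μ₀)) := by
  simp only [(hμ _).integral_eq (hK _).1 hv hvC hvdual hΘ.1 f.continuous,
    hμ₀.integral_eq hK₀ hv hvC hvdual hΘ.1 f.continuous]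
  exact tendsto_integral_surfDensity hv hvC hvdual hΘ.1 hϖc hϖ hK hK₀ hconv f

end WeakConvergence

/-- If `K_j ∈ K(C,ϖ)` and `K_j → K₀`, then the `Θ`-weighted surface area
measures converge weakly: `S_{n-1}^Θ(K_j,·) → S_{n-1}^Θ(K₀,·)`. -/
theorem statement11 (n : ℕ) (hn : 2 ≤ n) (C : Set (En n)) (hC : IsGoodCone n C)
    (v : En n) (hv1 : ‖v‖ = 1) (hv2 : v ∈ interior C) (hv3 : -v ∈ interior (dualCone n C))
    (q : ℝ) (hq1 : (n : ℝ) - 1 < q) (hq2 : q < n)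
    (Θ : En n → ℝ) (hΘ : IsThetaWeight n C q Θ)
    (ϖ : Set (En n)) (hϖne : ϖ.Nonempty) (hϖc : IsCompact ϖ) (hϖsub : ϖ ⊆ omegaDual n C)
    (K : ℕ → Set (En n)) (K₀ : Set (En n))
    (hKj : ∀ j, CDetermined n C ϖ (K j)) (hK₀ : CDetermined n C ϖ K₀)
    (hconv : ∃ t₀ > (0 : ℝ), (∀ j, (K j ∩ Cminus n C v t₀).Nonempty) ∧
      (K₀ ∩ Cminus n C v t₀).Nonempty ∧
      ∀ t > t₀, Tendsto
        (fun j => Metric.hausdorffDist (K j ∩ Cminus n C v t) (K₀ ∩ Cminus n C v t))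
        atTop (nhds 0))
    (μ : ℕ → Measure (En n)) (μ₀ : Measure (En n))
    (hμ : ∀ j, RepsSurf n C Θ (K j) (μ j)) (hμ₀ : RepsSurf n C Θ K₀ μ₀) :
    ∀ f : BoundedContinuousFunction (En n) ℝ,
      Tendsto (fun j => ∫ x, f x ∂(μ j)) atTop (nhds (∫ x, f x ∂μ₀)) :=
  fun f => statement11_general hv1 hv2 hv3 ⟨hΘ.1, fun x hx => (hΘ.2.1 x hx).le⟩ hϖc hϖsub hKj hK₀.1
    hconv hμ hμ₀ f
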